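/- arXiv:1702.03961 — 6 statements merged into one kernel-verified Lean document; each statement's English description precedes it below -/
import Mathlib

section
/- Let Σ be an alphabet of size k ≥ 2 and let M be a DFA over Σ with n states, and set h = ⌈log₂ k⌉. Then there exists a DFA M' over a two-letter alphabet with (2^h − 1)·n states such that the universal lengths of M' are exactly the numbers h·ℓ where ℓ is a universal length of M; in particular, M' has a universal length if and only if M does, and in that case the minimal universality length of M' equals h times the minimal universality length of M. -/
/-- `ℓ` is a universal length for the language `L`: every word of length `ℓ` belongs to `L`. -/
def IsUnivLength {α : Type*} (L : Language α) (ℓ : ℕ) : Prop :=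
  ∀ w : List α, w.length = ℓ → w ∈ L

/-!
Since `k ≤ 2 ^ h`, the blocks of `h` bits can be decoded onto the letters of `M`. The automaton `M'`
remembers a state of `M` together with the bits read so far of the current block; when the block is
complete, it makes the step of `M` on the decoded letter. There are
`1 + 2 + ⋯ + 2 ^ (h - 1) = 2 ^ h - 1` incomplete blocks. Acceptance only at block boundaries makes
the length of every accepted word a multiple of `h`, and a concatenation of blocks is accepted by
`M'` exactly when its decoding is accepted by `M`. As every word over the alphabet of `M` is
a decoding, the universal lengths of `M'` are `h` times those of `M`.
-/

section

open Function (Surjective)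

variable {α σ Q : Type*} {h : ℕ}

/-- The words of length less than `h`: the part already read of an unfinished block of `h`
letters. -/
abbrev PartialBlock (α : Type*) (h : ℕ) : Type _ :=
  {u : List α // u.length < h}

namespace PartialBlock

/-- The unfinished block of which nothing has been read yet. -/
def nil [NeZero h] : PartialBlock α h :=
  ⟨[], NeZero.pos h⟩

/-- Unfinished blocks sorted by their length, which makes them finitely many over a finite
alphabet. -/
def equivSigmaVector : PartialBlock α h ≃ Σ i : Fin h, List.Vector α i where
  toFun u := ⟨⟨u.1.length, u.2⟩, u.1, rfl⟩
  invFun v := ⟨v.2.1, v.2.2.trans_lt v.1.isLt⟩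
  left_inv _ := rfl
  right_inv := by
    rintro ⟨⟨i, hi⟩, ⟨u, hu⟩⟩
    cases hu
    rfl

instance [Fintype α] : Fintype (PartialBlock α h) :=
  Fintype.ofEquiv _ equivSigmaVector.symm

theorem card_eq_sum [Fintype α] :
    Fintype.card (PartialBlock α h) = ∑ i ∈ Finset.range h, Fintype.card α ^ i := by
  simp [Fintype.card_congr equivSigmaVector, Fin.sum_univ_eq_sum_range]

theorem card_bool : Fintype.card (PartialBlock Bool h) = 2 ^ h - 1 := by
  simp [card_eq_sum, Nat.geomSum_eq le_rfl]

end PartialBlock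

theorem exists_surjective_vector_of_card_le [Fintype α] [Fintype σ] [Nonempty σ]
    (hcard : Fintype.card σ ≤ Fintype.card α ^ h) :
    ∃ decode : List.Vector α h → σ, Surjective decode :=
  Function.exists_surjective_iff.2
    ⟨inferInstance, Function.Embedding.nonempty_of_card_le (hcard.trans_eq (card_vector h).symm)⟩

theorem exists_flatMap_toList_eq (ℓ : ℕ) (w : List α) (hw : w.length = h * ℓ) :
    ∃ vs : List (List.Vector α h), vs.length = ℓ ∧ vs.flatMap List.Vector.toList = w := by
  induction ℓ generalizing w with
  | zero => exact ⟨[], rfl, (List.eq_nil_of_length_eq_zero hw).symm⟩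
  | succ ℓ ih =>
    rw [Nat.mul_succ] at hw
    have length_take : (w.take h).length = h := by simp [hw]
    obtain ⟨vs, length_vs, flatMap_vs⟩ := ih (w.drop h) (by simp [hw])
    obtain ⟨v, toList_v⟩ : ∃ v : List.Vector α h, v.toList = w.take h := ⟨⟨_, length_take⟩, rfl⟩
    refine ⟨v :: vs, by simp [length_vs], ?_⟩
    rw [List.flatMap_cons, toList_v, flatMap_vs, List.take_append_drop]

theorem length_flatMap_toList (vs : List (List.Vector α h)) :
    (vs.flatMap List.Vector.toList).length = h * vs.length := by
  simp [List.length_flatMap, mul_comm]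

/-- The automaton that reads blocks of `h` letters and simulates one step of `M` on the decoded
letter at the end of each block. It accepts only at block boundaries. -/
def blockDFA [NeZero h] (decode : List.Vector α h → σ) (M : DFA σ Q) :
    DFA α (PartialBlock α h × Q) where
  step s a :=
    if hlt : (s.1.1 ++ [a]).length < h then (⟨s.1.1 ++ [a], hlt⟩, s.2)
    else
      (PartialBlock.nil, M.step s.2 (decode
        ⟨s.1.1 ++ [a], le_antisymm (by simpa using s.1.2) (not_lt.1 hlt)⟩))
  start := (PartialBlock.nil, M.start)
  accept := {PartialBlock.nil} ×ˢ M.accept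

namespace blockDFA

variable [NeZero h] (decode : List.Vector α h → σ) (M : DFA σ Q)

theorem evalFrom_of_length_lt (q : Q) (u : List α) (hu : u.length < h) :
    (blockDFA decode M).evalFrom (PartialBlock.nil, q) u = (⟨u, hu⟩, q) := by
  induction u using List.reverseRecOn with
  | nil => rfl
  | append_singleton u a ih =>
    have hlt : u.length < h := lt_of_le_of_lt (by simp) hu
    rw [DFA.evalFrom_append_singleton, ih hlt]
    exact dif_pos hu

theorem evalFrom_toList (q : Q) (v : List.Vector α h) :
    (blockDFA decode M).evalFrom (PartialBlock.nil, q) v.toList =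
      (PartialBlock.nil, M.step q (decode v)) := by
  obtain ⟨w, hw⟩ := v
  obtain rfl | ⟨u, a, rfl⟩ := w.eq_nil_or_concat'
  · exact absurd hw.symm (NeZero.ne h)
  · have hu : u.length < h := by simp [← hw]
    rw [List.Vector.toList_mk, DFA.evalFrom_append_singleton, evalFrom_of_length_lt decode M q u hu]
    exact dif_neg hw.not_lt

theorem evalFrom_flatMap_toList (q : Q) (vs : List (List.Vector α h)) :
    (blockDFA decode M).evalFrom (PartialBlock.nil, q) (vs.flatMap List.Vector.toList) =
      (PartialBlock.nil, M.evalFrom q (vs.map decode)) := by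
  induction vs generalizing q with
  | nil => rfl
  | cons v vs ih =>
    rw [List.flatMap_cons, DFA.evalFrom_of_append, evalFrom_toList, ih, List.map_cons,
      DFA.evalFrom_cons]

theorem flatMap_toList_mem_accepts_iff (vs : List (List.Vector α h)) :
    vs.flatMap List.Vector.toList ∈ (blockDFA decode M).accepts ↔ vs.map decode ∈ M.accepts := by
  have eval_flatMap : (blockDFA decode M).eval (vs.flatMap List.Vector.toList) =
      (PartialBlock.nil, M.eval (vs.map decode)) :=
    evalFrom_flatMap_toList decode M M.start vs
  rw [DFA.mem_accepts, DFA.mem_accepts, eval_flatMap]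
  simp [blockDFA]

theorem length_step_modEq (s : PartialBlock α h × Q) (a : α) :
    ((blockDFA decode M).step s a).1.1.length ≡ s.1.1.length + 1 [MOD h] := by
  by_cases hlt : s.1.1.length + 1 < h
  · simp [blockDFA, hlt, Nat.ModEq.refl]
  · have heq : s.1.1.length + 1 = h := le_antisymm s.1.2 (not_lt.1 hlt)
    simp [blockDFA, PartialBlock.nil, heq, Nat.ModEq]

theorem length_eval_modEq (w : List α) :
    ((blockDFA decode M).eval w).1.1.length ≡ w.length [MOD h] := by
  induction w using List.reverseRecOn with
  | nil => rfl
  | append_singleton w a ih =>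
    rw [DFA.eval_append_singleton, List.length_append, List.length_singleton]
    exact (length_step_modEq decode M _ a).trans (ih.add_right 1)

theorem dvd_length_of_mem_accepts {w : List α} (hw : w ∈ (blockDFA decode M).accepts) :
    h ∣ w.length := by
  have eval_eq_nil : ((blockDFA decode M).eval w).1 = PartialBlock.nil := hw.1
  have hmod := length_eval_modEq decode M w
  rw [eval_eq_nil] at hmod
  exact (Nat.modEq_zero_iff_dvd).1 hmod.symm

theorem isUnivLength_mul_iff {decode : List.Vector α h → σ} (hdecode : Surjective decode) (ℓ : ℕ) :
    IsUnivLength (blockDFA decode M).accepts (h * ℓ) ↔ IsUnivLength M.accepts ℓ := by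
  constructor
  · intro huniv w hw
    obtain ⟨vs, rfl⟩ := List.map_surjective_iff.2 hdecode w
    rw [List.length_map] at hw
    exact (flatMap_toList_mem_accepts_iff decode M vs).1
      (huniv _ (by rw [length_flatMap_toList, hw]))
  · intro huniv w hw
    obtain ⟨vs, length_vs, rfl⟩ := exists_flatMap_toList_eq ℓ w hw
    exact (flatMap_toList_mem_accepts_iff decode M vs).2
      (huniv _ (by rw [List.length_map, length_vs]))

theorem isUnivLength_iff [Nonempty α] {decode : List.Vector α h → σ} (hdecode : Surjective decode)
    (ℓ' : ℕ) :
    IsUnivLength (blockDFA decode M).accepts ℓ' ↔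
      ∃ ℓ, IsUnivLength M.accepts ℓ ∧ ℓ' = h * ℓ := by
  constructor
  · intro huniv
    let w := List.replicate ℓ' (Classical.arbitrary α)
    have hw : w.length = ℓ' := List.length_replicate
    obtain ⟨ℓ, rfl⟩ : h ∣ ℓ' := hw ▸ dvd_length_of_mem_accepts decode M (huniv w hw)
    exact ⟨ℓ, (isUnivLength_mul_iff M hdecode ℓ).1 huniv, rfl⟩
  · rintro ⟨ℓ, huniv, rfl⟩
    exact (isUnivLength_mul_iff M hdecode ℓ).2 huniv

end blockDFA

theorem dfa_binarization_general [Nonempty α] (hh : h ≠ 0) {decode : List.Vector α h → σ}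
    (hdecode : Surjective decode) (M : DFA σ Q) :
    ∃ M' : DFA α (PartialBlock α h × Q),
      (∀ ℓ' : ℕ, IsUnivLength M'.accepts ℓ' ↔
          ∃ ℓ : ℕ, IsUnivLength M.accepts ℓ ∧ ℓ' = h * ℓ) ∧
      ((∃ ℓ : ℕ, IsUnivLength M.accepts ℓ) →
        ((∃ ℓ' : ℕ, IsUnivLength M'.accepts ℓ') ∧
          sInf {ℓ' : ℕ | IsUnivLength M'.accepts ℓ'} =
            h * sInf {ℓ : ℕ | IsUnivLength M.accepts ℓ})) := by
  have : NeZero h := ⟨hh⟩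
  have huniv := blockDFA.isUnivLength_iff M hdecode
  refine ⟨blockDFA decode M, huniv, fun hM => ⟨?_, ?_⟩⟩
  · obtain ⟨ℓ, hℓ⟩ := hM
    exact ⟨h * ℓ, (huniv _).2 ⟨ℓ, hℓ, rfl⟩⟩
  · have image_eq : {ℓ' | IsUnivLength (blockDFA decode M).accepts ℓ'} =
        (h * ·) '' {ℓ | IsUnivLength M.accepts ℓ} := by
      ext ℓ'
      simp [huniv, eq_comm]
    rw [image_eq]
    exact (mul_right_mono.map_csInf hM).symm

end

/-- Binarization of a DFA: for an alphabet of size `k ≥ 2` and `h = ⌈log₂ k⌉`, there is a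
DFA over a two-letter alphabet with `(2^h - 1) * n` states whose universal lengths are exactly
`h * ℓ` for universal lengths `ℓ` of `M`; consequently the minimal universality lengths are
related by the factor `h`. -/
theorem dfa_binarization (k n : ℕ) (hk : 2 ≤ k)
    (σ : Type) [Fintype σ] (hσ : Fintype.card σ = k)
    (Q : Type) [Fintype Q] (hQ : Fintype.card Q = n)
    (M : DFA σ Q) :
    ∃ (Q' : Type) (inst : Fintype Q'),
      @Fintype.card Q' inst = (2 ^ Nat.clog 2 k - 1) * n ∧
      ∃ M' : DFA Bool Q',
        (∀ ℓ' : ℕ, IsUnivLength M'.accepts ℓ' ↔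
            ∃ ℓ : ℕ, IsUnivLength M.accepts ℓ ∧ ℓ' = Nat.clog 2 k * ℓ) ∧
        ((∃ ℓ : ℕ, IsUnivLength M.accepts ℓ) →
          ((∃ ℓ' : ℕ, IsUnivLength M'.accepts ℓ') ∧
            sInf {ℓ' : ℕ | IsUnivLength M'.accepts ℓ'} =
              Nat.clog 2 k * sInf {ℓ : ℕ | IsUnivLength M.accepts ℓ})) := by
  have : Nontrivial σ := Fintype.one_lt_card_iff_nontrivial.1 (hσ ▸ hk)
  have hcard : Fintype.card σ ≤ Fintype.card Bool ^ Nat.clog 2 k := by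
    simpa [hσ] using Nat.le_pow_clog one_lt_two k
  obtain ⟨decode, hdecode⟩ := exists_surjective_vector_of_card_le hcard
  exact ⟨PartialBlock Bool (Nat.clog 2 k) × Q, inferInstance,
    by rw [Fintype.card_prod, PartialBlock.card_bool, hQ],
    dfa_binarization_general (Nat.clog_pos one_lt_two hk).ne' hdecode M⟩
end

section
/- Let Σ be an alphabet of size k ≥ 2 and let M be an NFA over Σ with n states, and set h = ⌈log₂ k⌉. Then there exists an NFA M' over a two-letter alphabet with (2^h − 1)·n states such that the universal lengths of M' are exactly the numbers h·ℓ where ℓ is a universal length of M; in particular, M' has a universal length if and only if M does, and in that case the minimal universality length of M' equals h times the minimal universality length of M. -/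
/-!
Encode every letter of `σ` by a word of length `h` over the small alphabet. An automaton reading
such encodings remembers, besides the state of `M`, the part of the current block read so far (a
word of length `< h`); once the block is complete it performs the step of `M` on the decoded letter.
Every word factors into full blocks followed by a remainder of length `< h`, and it is accepted
exactly when the remainder is empty and `M` accepts the decoded blocks. Blocks that encode no
letter are decoded arbitrarily, so that every block stands for some letter of `σ`: this is what
makes `h * ℓ` a universal length whenever `ℓ` is one.
-/

section Words

variable {β : Type*} {h : ℕ}

theorem length_flatten_of_forall_length_eq {us : List (List β)}
    (hus : ∀ u ∈ us, u.length = h) : us.flatten.length = h * us.length := by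
  rw [List.length_flatten, List.sum_eq_card_nsmul _ h (by simpa using hus), List.length_map,
    smul_eq_mul, mul_comm]

theorem exists_eq_flatten_append (hh : 0 < h) (w : List β) :
    ∃ (us : List (List β)) (v : List β),
      (∀ u ∈ us, u.length = h) ∧ v.length < h ∧ w = us.flatten ++ v := by
  induction hn : w.length using Nat.strong_induction_on generalizing w with
  | _ n ih =>
    by_cases hw : w.length < h
    · exact ⟨[], w, by simp, hw, rfl⟩
    · obtain ⟨us, v, hus, hv, hdrop⟩ :=
        ih (w.drop h).length (by rw [List.length_drop]; lia) (w.drop h) rfl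
      refine ⟨w.take h :: us, v, ?_, hv, ?_⟩
      · exact List.forall_mem_cons.2 ⟨List.length_take_of_le (by lia), hus⟩
      · rw [List.flatten_cons, List.append_assoc, ← hdrop, List.take_append_drop]

theorem exists_injective_length_eq {σ : Type*} [Fintype σ] [Fintype β]
    (hcard : Fintype.card σ ≤ Fintype.card β ^ h) :
    ∃ encode : σ → List β, Function.Injective encode ∧ ∀ a, (encode a).length = h := by
  obtain ⟨e⟩ : Nonempty (σ ↪ List.Vector β h) :=
    Function.Embedding.nonempty_of_card_le (by rwa [card_vector])
  exact ⟨fun a => (e a).toList, List.Vector.toList_injective.comp e.injective,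
    fun a => (e a).toList_length⟩

end Words

/-- The words over `β` of length less than `h`: the proper prefixes of blocks of length `h`. -/
abbrev ShortWord (β : Type*) (h : ℕ) : Type _ := {v : List β // v.length < h}

namespace ShortWord

variable (β : Type*) (h : ℕ)

/-- A short word is a word of some fixed length `i < h`. -/
def equivSigmaVector : ShortWord β h ≃ Σ i : Fin h, List.Vector β i where
  toFun v := ⟨⟨v.1.length, v.2⟩, ⟨v.1, rfl⟩⟩
  invFun v := ⟨v.2.toList, by simp⟩
  left_inv _ := rfl
  right_inv := by
    rintro ⟨⟨i, hi⟩, u, hu⟩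
    obtain rfl : u.length = i := hu
    rfl

instance [Fintype β] : Fintype (ShortWord β h) :=
  Fintype.ofEquiv _ (equivSigmaVector β h).symm

theorem card [Fintype β] :
    Fintype.card (ShortWord β h) = ∑ i ∈ Finset.range h, Fintype.card β ^ i := by
  rw [Fintype.card_congr (equivSigmaVector β h), Fintype.card_sigma, Finset.sum_range]
  simp only [card_vector]

theorem card_bool : Fintype.card (ShortWord Bool h) = 2 ^ h - 1 := by
  rw [card, Fintype.card_bool, Nat.geomSum_eq le_rfl, Nat.div_one]

end ShortWord

/-- The automaton over `β` that simulates `M` on blocks of length `h`, each block `u` standing for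
the letter `decode u`. A state consists of the part of the current block read so far and of the
current state of `M`. Only the values of `decode` at words of length `h` matter. -/
def blockNFA {β σ Q : Type*} (h : ℕ) (decode : List β → σ) (M : NFA σ Q) :
    NFA β (ShortWord β h × Q) where
  step p b := {r |
    if p.1.1.length + 1 < h then r.1.1 = p.1.1 ++ [b] ∧ r.2 = p.2
    else r.1.1 = [] ∧ r.2 ∈ M.step p.2 (decode (p.1.1 ++ [b]))}
  start := {p | p.1.1 = [] ∧ p.2 ∈ M.start}
  accept := {p | p.1.1 = [] ∧ p.2 ∈ M.accept}

namespace blockNFA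

variable {β σ Q : Type*} {h : ℕ}

/-- The set of states of `blockNFA h decode M` in which `v` is the part of the current block read so
far and the state of `M` lies in `S`; it is empty unless `v.length < h`. -/
def configSet (h : ℕ) (v : List β) (S : Set Q) : Set (ShortWord β h × Q) :=
  {p | p.1.1 = v ∧ p.2 ∈ S}

variable {decode : List β → σ} {M : NFA σ Q} {S : Set Q} {u v : List β} {us : List (List β)}

theorem stepSet_configSet_of_lt (hv : v.length + 1 < h) (b : β) :
    (blockNFA h decode M).stepSet (configSet h v S) b = configSet h (v ++ [b]) S := by
  ext ⟨x, q⟩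
  rw [NFA.mem_stepSet]
  constructor
  · rintro ⟨⟨⟨_, _⟩, _⟩, ⟨rfl, hS⟩, hstep⟩
    obtain ⟨hx, rfl⟩ := (if_pos hv).mp hstep
    exact ⟨hx, hS⟩
  · rintro ⟨hx, hq⟩
    exact ⟨(⟨v, by lia⟩, q), ⟨rfl, hq⟩, (if_pos hv).mpr ⟨hx, rfl⟩⟩

theorem stepSet_configSet_of_eq (hv : v.length + 1 = h) (b : β) :
    (blockNFA h decode M).stepSet (configSet h v S) b =
      configSet h [] (M.stepSet S (decode (v ++ [b]))) := by
  have hv' : ¬ v.length + 1 < h := hv.not_lt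
  ext ⟨x, q⟩
  rw [NFA.mem_stepSet]
  constructor
  · rintro ⟨⟨⟨_, _⟩, p⟩, ⟨rfl, hp⟩, hstep⟩
    obtain ⟨hx, hq⟩ := (if_neg hv').mp hstep
    exact ⟨hx, NFA.mem_stepSet.2 ⟨p, hp, hq⟩⟩
  · rintro ⟨hx, hq⟩
    obtain ⟨p, hp, hpq⟩ := NFA.mem_stepSet.1 hq
    exact ⟨(⟨v, by lia⟩, p), ⟨rfl, hp⟩, (if_neg hv').mpr ⟨hx, hpq⟩⟩

theorem evalFrom_configSet_nil_of_length_lt (hv : v.length < h) :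
    (blockNFA h decode M).evalFrom (configSet h [] S) v = configSet h v S := by
  induction v using List.reverseRecOn with
  | nil => rfl
  | append_singleton v b ih =>
    rw [List.length_append, List.length_singleton] at hv
    rw [NFA.evalFrom_append, ih (by lia), NFA.evalFrom_singleton, stepSet_configSet_of_lt hv]

theorem evalFrom_configSet_nil_of_length_eq (hh : 0 < h) (hu : u.length = h) :
    (blockNFA h decode M).evalFrom (configSet h [] S) u =
      configSet h [] (M.stepSet S (decode u)) := by
  obtain rfl | ⟨v, b, rfl⟩ := u.eq_nil_or_concat'
  · exact absurd hu hh.ne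
  · rw [List.length_append, List.length_singleton] at hu
    rw [NFA.evalFrom_append, evalFrom_configSet_nil_of_length_lt (by lia), NFA.evalFrom_singleton,
      stepSet_configSet_of_eq hu]

theorem evalFrom_configSet_nil_flatten (hh : 0 < h) (hus : ∀ u ∈ us, u.length = h) :
    (blockNFA h decode M).evalFrom (configSet h [] S) us.flatten =
      configSet h [] (M.evalFrom S (us.map decode)) := by
  induction us generalizing S with
  | nil => rfl
  | cons u us ih =>
    obtain ⟨hu, hus⟩ := List.forall_mem_cons.1 hus
    rw [List.flatten_cons, NFA.evalFrom_append, evalFrom_configSet_nil_of_length_eq hh hu, ih hus,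
      List.map_cons, NFA.evalFrom_cons]

theorem eval_flatten_append (hus : ∀ u ∈ us, u.length = h) (hv : v.length < h) :
    (blockNFA h decode M).eval (us.flatten ++ v) = configSet h v (M.eval (us.map decode)) := by
  change (blockNFA h decode M).evalFrom (configSet h [] M.start) _ = _
  rw [NFA.evalFrom_append, evalFrom_configSet_nil_flatten (by lia) hus,
    evalFrom_configSet_nil_of_length_lt hv, NFA.eval]

theorem flatten_append_mem_accepts_iff (hus : ∀ u ∈ us, u.length = h) (hv : v.length < h) :
    us.flatten ++ v ∈ (blockNFA h decode M).accepts ↔ v = [] ∧ us.map decode ∈ M.accepts := by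
  change (∃ p ∈ (blockNFA h decode M).accept, p ∈ (blockNFA h decode M).eval _) ↔ _
  rw [eval_flatten_append hus hv]
  constructor
  · rintro ⟨p, ⟨hnil, haccept⟩, hp, heval⟩
    exact ⟨hp.symm.trans hnil, p.2, haccept, heval⟩
  · rintro ⟨rfl, q, haccept, heval⟩
    exact ⟨(⟨[], hv⟩, q), ⟨rfl, haccept⟩, rfl, heval⟩

theorem dvd_of_isUnivLength [Nonempty β] (hh : 0 < h) {m : ℕ}
    (hm : IsUnivLength (blockNFA h decode M).accepts m) : h ∣ m := by
  obtain ⟨b⟩ := ‹Nonempty β›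
  obtain ⟨us, v, hus, hv, hw⟩ := exists_eq_flatten_append hh (List.replicate m b)
  have haccepts : List.replicate m b ∈ (blockNFA h decode M).accepts := hm _ List.length_replicate
  obtain rfl : v = [] := by
    rw [hw, flatten_append_mem_accepts_iff hus hv] at haccepts
    exact haccepts.1
  refine ⟨us.length, ?_⟩
  rw [← length_flatten_of_forall_length_eq hus, ← List.append_nil us.flatten, ← hw,
    List.length_replicate]

theorem isUnivLength_of_isUnivLength_mul (hh : 0 < h) {encode : σ → List β}
    (hlength : ∀ a, (encode a).length = h) (hdecode : Function.LeftInverse decode encode) {ℓ : ℕ}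
    (hℓ : IsUnivLength (blockNFA h decode M).accepts (h * ℓ)) : IsUnivLength M.accepts ℓ := by
  intro w hw
  have hblocks : ∀ u ∈ w.map encode, u.length = h := List.forall_mem_map.2 fun a _ => hlength a
  have haccepts : (w.map encode).flatten ++ [] ∈ (blockNFA h decode M).accepts := by
    apply hℓ
    rw [List.append_nil, length_flatten_of_forall_length_eq hblocks, List.length_map, hw]
  rw [flatten_append_mem_accepts_iff hblocks (by simpa using hh), List.map_map, hdecode.comp_eq_id,
    List.map_id] at haccepts
  exact haccepts.2

theorem isUnivLength_mul (hh : 0 < h) {ℓ : ℕ} (hℓ : IsUnivLength M.accepts ℓ) :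
    IsUnivLength (blockNFA h decode M).accepts (h * ℓ) := by
  intro w hw
  obtain ⟨us, v, hus, hv, rfl⟩ := exists_eq_flatten_append hh w
  rw [List.length_append, length_flatten_of_forall_length_eq hus] at hw
  have hvlen : v.length = 0 := by
    have hmod := congrArg (· % h) hw
    simpa only [Nat.mul_add_mod, Nat.mul_mod_right, Nat.mod_eq_of_lt hv] using hmod
  have huslen : us.length = ℓ := Nat.eq_of_mul_eq_mul_left hh (by lia)
  exact (flatten_append_mem_accepts_iff hus hv).2
    ⟨List.eq_nil_of_length_eq_zero hvlen, hℓ _ (by rw [List.length_map, huslen])⟩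

theorem isUnivLength_iff [Nonempty β] (hh : 0 < h) {encode : σ → List β}
    (hlength : ∀ a, (encode a).length = h) (hdecode : Function.LeftInverse decode encode) (m : ℕ) :
    IsUnivLength (blockNFA h decode M).accepts m ↔ ∃ ℓ, IsUnivLength M.accepts ℓ ∧ m = h * ℓ := by
  constructor
  · intro hm
    obtain ⟨ℓ, rfl⟩ := dvd_of_isUnivLength hh hm
    exact ⟨ℓ, isUnivLength_of_isUnivLength_mul hh hlength hdecode hm, rfl⟩
  · rintro ⟨ℓ, hℓ, rfl⟩
    exact isUnivLength_mul hh hℓ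

end blockNFA

theorem nfa_binarization_general {σ β Q : Type*} [Nonempty σ] {h : ℕ} (hh : 0 < h)
    {encode : σ → List β} (hencode : Function.Injective encode)
    (hlength : ∀ a, (encode a).length = h) (M : NFA σ Q) :
    ∃ M' : NFA β (ShortWord β h × Q),
      (∀ ℓ' : ℕ, IsUnivLength M'.accepts ℓ' ↔
          ∃ ℓ : ℕ, IsUnivLength M.accepts ℓ ∧ ℓ' = h * ℓ) ∧
      ((∃ ℓ : ℕ, IsUnivLength M.accepts ℓ) →
        ((∃ ℓ' : ℕ, IsUnivLength M'.accepts ℓ') ∧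
          sInf {ℓ' : ℕ | IsUnivLength M'.accepts ℓ'} =
            h * sInf {ℓ : ℕ | IsUnivLength M.accepts ℓ})) := by
  have : Nonempty β := ‹Nonempty σ›.map fun a => (encode a)[0]'(by rwa [hlength])
  let M' := blockNFA h (Function.invFun encode) M
  have hiff : ∀ m, IsUnivLength M'.accepts m ↔ ∃ ℓ, IsUnivLength M.accepts ℓ ∧ m = h * ℓ :=
    blockNFA.isUnivLength_iff hh hlength (Function.leftInverse_invFun hencode)
  refine ⟨M', hiff, fun ⟨ℓ, hℓ⟩ => ⟨⟨h * ℓ, (hiff _).2 ⟨ℓ, hℓ, rfl⟩⟩, ?_⟩⟩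
  have himage : {m | IsUnivLength M'.accepts m} = (h * ·) '' {ℓ | IsUnivLength M.accepts ℓ} := by
    ext m
    simp only [hiff, Set.mem_ofPred_eq, Set.mem_image, eq_comm]
  rw [himage]
  exact ((mul_right_mono (a := h)).map_isLeast (isLeast_csInf ⟨ℓ, hℓ⟩)).csInf_eq

/-- Binarization of an NFA: for an alphabet of size `k ≥ 2` and `h = ⌈log₂ k⌉`, there is an
NFA over a two-letter alphabet with `(2^h - 1) * n` states whose universal lengths are exactly
`h * ℓ` for universal lengths `ℓ` of `M`; consequently the minimal universality lengths are
related by the factor `h`. -/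
theorem nfa_binarization (k n : ℕ) (hk : 2 ≤ k)
    (σ : Type) [Fintype σ] (hσ : Fintype.card σ = k)
    (Q : Type) [Fintype Q] (hQ : Fintype.card Q = n)
    (M : NFA σ Q) :
    ∃ (Q' : Type) (inst : Fintype Q'),
      @Fintype.card Q' inst = (2 ^ Nat.clog 2 k - 1) * n ∧
      ∃ M' : NFA Bool Q',
        (∀ ℓ' : ℕ, IsUnivLength M'.accepts ℓ' ↔
            ∃ ℓ : ℕ, IsUnivLength M.accepts ℓ ∧ ℓ' = Nat.clog 2 k * ℓ) ∧
        ((∃ ℓ : ℕ, IsUnivLength M.accepts ℓ) →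
          ((∃ ℓ' : ℕ, IsUnivLength M'.accepts ℓ') ∧
            sInf {ℓ' : ℕ | IsUnivLength M'.accepts ℓ'} =
              Nat.clog 2 k * sInf {ℓ : ℕ | IsUnivLength M.accepts ℓ})) := by
  subst hσ hQ
  have : Nonempty σ := Fintype.card_pos_iff.1 (by lia)
  obtain ⟨encode, hencode, hlength⟩ := exists_injective_length_eq (σ := σ) (β := Bool)
    (h := Nat.clog 2 (Fintype.card σ)) (Nat.le_pow_clog one_lt_two _)
  exact ⟨ShortWord Bool _ × Q, inferInstance, by rw [Fintype.card_prod, ShortWord.card_bool],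
    nfa_binarization_general (Nat.clog_pos one_lt_two hk) hencode hlength M⟩
end

section
/- Let Σ be an alphabet of size k ≥ 2 and let r be a regular expression over Σ containing n input symbols (occurrences of single-letter atoms), and set h = ⌈log₂ k⌉. Then there exists a regular expression r' over a two-letter alphabet with at most (2h − 1)·n input symbols such that the universal lengths of the language of r' are exactly the numbers h·ℓ where ℓ is a universal length of the language of r; in particular, r' has a universal length if and only if r does, and in that case the minimal universality length of r' equals h times that of r. -/
/-- The number of input symbols (occurrences of single-letter atoms) of a regular expression. -/
def symCount {α : Type*} : RegularExpression α → ℕ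
  | RegularExpression.zero => 0
  | RegularExpression.epsilon => 0
  | RegularExpression.char _ => 1
  | RegularExpression.plus r s => symCount r + symCount s
  | RegularExpression.comp r s => symCount r + symCount s
  | RegularExpression.star r => symCount r

/-!
Encode every letter of `σ` by a nonempty set of binary words of length `h = ⌈log₂ k⌉` such that
these sets partition all binary words of length `h`; then every binary word of length `h * ℓ`
encodes exactly one word of length `ℓ`, and substituting expressions for the sets into `r` scales
its universal lengths by `h`. For small expressions, let each set share all bits but the last:
since `2 ^ (h - 1) < k ≤ 2 ^ h`, every prefix of length `h - 1` can be given to one or two letters,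
and a letter costs `h` symbols, or `h + 1` if it owns its prefix alone. The latter is at most
`2 * h - 1` unless `h = 1`, and then `k = 2` and each letter gets a single bit.
-/

section Substitution

open scoped Computability

variable {α β : Type*}

/-- Substitution of languages for letters, as the semiring homomorphism that sends `{[a]}`
to `C a`. A word `u` is sent to the product of the languages of its letters, the words of which
are the encodings of `u` when `C a` is regarded as the set of codewords of `a`. -/
def langSubst (C : α → Language β) : Language α →+* Language β where
  toFun L := {w | ∃ u ∈ L, w ∈ (u.map C).prod}
  map_zero' := by ext w; exact ⟨fun ⟨_, hu, _⟩ ↦ hu, False.elim⟩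
  map_one' := by ext w; exact ⟨fun ⟨_, rfl, hw⟩ ↦ hw, fun hw ↦ ⟨[], rfl, hw⟩⟩
  map_add' L M := by
    ext w
    change (∃ u, (u ∈ L ∨ u ∈ M) ∧ _) ↔ (∃ u, u ∈ L ∧ _) ∨ (∃ u, u ∈ M ∧ _)
    simp only [or_and_right, exists_or]
  map_mul' L M := by
    ext w
    constructor
    · rintro ⟨_, ⟨u, hu, v, hv, rfl⟩, hw⟩
      rw [List.map_append, List.prod_append] at hw
      obtain ⟨x, hx, y, hy, rfl⟩ := hw
      exact ⟨x, ⟨u, hu, hx⟩, y, ⟨v, hv, hy⟩, rfl⟩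
    · rintro ⟨x, ⟨u, hu, hx⟩, y, ⟨v, hv, hy⟩, rfl⟩
      refine ⟨u ++ v, Language.append_mem_mul hu hv, ?_⟩
      rw [List.map_append, List.prod_append]
      exact Language.append_mem_mul hx hy

lemma mem_langSubst {C : α → Language β} {L : Language α} {w : List β} :
    w ∈ langSubst C L ↔ ∃ u ∈ L, w ∈ (u.map C).prod :=
  Iff.rfl

lemma langSubst_singleton (C : α → Language β) (u : List α) :
    langSubst C {u} = (u.map C).prod := by
  ext w
  exact ⟨fun ⟨_, rfl, hw⟩ ↦ hw, fun hw ↦ ⟨u, rfl, hw⟩⟩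

lemma langSubst_iSup {ι : Sort*} (C : α → Language β) (L : ι → Language α) :
    langSubst C (⨆ i, L i) = ⨆ i, langSubst C (L i) := by
  ext w
  simp only [mem_langSubst, Language.mem_iSup]
  tauto

lemma langSubst_kstar (C : α → Language β) (L : Language α) :
    langSubst C L∗ = (langSubst C L)∗ := by
  simp only [Language.kstar_eq_iSup_pow, langSubst_iSup, map_pow]

/-- Substitution of regular expressions for the letters of a regular expression. -/
def regexSubst (c : α → RegularExpression β) : RegularExpression α → RegularExpression β
  | .zero => 0
  | .epsilon => 1
  | .char a => c a
  | .plus r s => regexSubst c r + regexSubst c s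
  | .comp r s => regexSubst c r * regexSubst c s
  | .star r => (regexSubst c r).star

lemma matches'_regexSubst (c : α → RegularExpression β) (r : RegularExpression α) :
    (regexSubst c r).matches' = langSubst (fun a ↦ (c a).matches') r.matches' := by
  induction r with
  | zero => exact (map_zero _).symm
  | epsilon => exact (map_one _).symm
  | char a =>
    rw [RegularExpression.matches'_char, langSubst_singleton, List.map_singleton,
      List.prod_singleton, regexSubst]
  | plus r s ihr ihs => exact (congrArg₂ (· + ·) ihr ihs).trans (map_add _ _ _).symm
  | comp r s ihr ihs => exact (congrArg₂ (· * ·) ihr ihs).trans (map_mul _ _ _).symm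
  | star r ih => exact (congrArg (·∗) ih).trans (langSubst_kstar _ _).symm

lemma symCount_regexSubst_le {c : α → RegularExpression β} {B : ℕ} (hc : ∀ a, symCount (c a) ≤ B)
    (r : RegularExpression α) : symCount (regexSubst c r) ≤ B * symCount r := by
  induction r with
  | zero | epsilon => exact Nat.zero_le _
  | char a => exact (hc a).trans_eq (mul_one B).symm
  | plus r s ihr ihs | comp r s ihr ihs => exact (add_le_add ihr ihs).trans_eq (mul_add ..).symm
  | star _ ih => exact ih

end Substitution

section BlockCode

variable {α β : Type*}

/-- A block code of length `h` in which letters may have several codewords: the sets `C a` of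
codewords of the letters form a partition of all words of length `h`. -/
structure IsBlockCode (C : α → Language β) (h : ℕ) : Prop where
  length_eq : ∀ {a x}, x ∈ C a → x.length = h
  nonempty : ∀ a, ∃ x, x ∈ C a
  existsUnique_mem : ∀ x : List β, x.length = h → ∃! a, x ∈ C a

namespace IsBlockCode

variable {C : α → Language β} {h : ℕ}

lemma length_of_mem_prod (hC : IsBlockCode C h) {u : List α} {w : List β}
    (hw : w ∈ (u.map C).prod) : w.length = h * u.length := by
  induction u generalizing w with
  | nil => exact congrArg List.length hw
  | cons a u ih =>
    obtain ⟨x, hx, y, hy, rfl⟩ := hw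
    rw [List.length_append, hC.length_eq hx, ih hy, List.length_cons, Nat.mul_succ, add_comm]

lemma exists_mem_prod (hC : IsBlockCode C h) (u : List α) : ∃ w, w ∈ (u.map C).prod := by
  induction u with
  | nil => exact ⟨[], rfl⟩
  | cons a u ih =>
    obtain ⟨x, hx⟩ := hC.nonempty a
    obtain ⟨y, hy⟩ := ih
    exact ⟨x ++ y, Language.append_mem_mul hx hy⟩

lemma existsUnique_mem_prod (hC : IsBlockCode C h) {ℓ : ℕ} {w : List β}
    (hw : w.length = h * ℓ) : ∃! u : List α, u.length = ℓ ∧ w ∈ (u.map C).prod := by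
  induction ℓ generalizing w with
  | zero =>
    obtain rfl : w = [] := List.length_eq_zero_iff.1 hw
    exact ⟨[], ⟨rfl, rfl⟩, fun u hu ↦ List.length_eq_zero_iff.1 hu.1⟩
  | succ ℓ ih =>
    rw [Nat.mul_succ] at hw
    have head_length : (w.take h).length = h := by simp [hw]
    obtain ⟨a, ha, a_unique⟩ := hC.existsUnique_mem _ head_length
    obtain ⟨u, ⟨hu, hwu⟩, u_unique⟩ := ih (w := w.drop h) (by simp [hw])
    refine ⟨a :: u, ⟨by simp [hu], w.take h, ha, w.drop h, hwu, List.take_append_drop h w⟩, ?_⟩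
    rintro (_ | ⟨b, v⟩) ⟨hv, hwv⟩
    · cases hv
    · obtain ⟨x, hx, y, hy, rfl⟩ := hwv
      have hxh : x.length = h := hC.length_eq hx
      rw [a_unique b (by rwa [← hxh, List.take_left]),
        u_unique v ⟨Nat.succ.inj hv, by rwa [← hxh, List.drop_left]⟩]

lemma isUnivLength_langSubst_mul_iff (hC : IsBlockCode C h) (hh : 0 < h) {L : Language α} {ℓ : ℕ} :
    IsUnivLength (langSubst C L) (h * ℓ) ↔ IsUnivLength L ℓ := by
  constructor
  · intro hU u hu
    obtain ⟨w, hw⟩ := hC.exists_mem_prod u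
    have hwℓ : w.length = h * ℓ := hu ▸ hC.length_of_mem_prod hw
    obtain ⟨v, hvL, hv⟩ := hU w hwℓ
    have hvℓ : v.length = ℓ :=
      Nat.eq_of_mul_eq_mul_left hh ((hC.length_of_mem_prod hv).symm.trans hwℓ)
    rwa [(hC.existsUnique_mem_prod hwℓ).unique ⟨hu, hw⟩ ⟨hvℓ, hv⟩]
  · intro hU w hw
    obtain ⟨u, ⟨hu, hwu⟩, -⟩ := hC.existsUnique_mem_prod hw
    exact ⟨u, hU u hu, hwu⟩

lemma isUnivLength_langSubst_iff [Nonempty β] (hC : IsBlockCode C h) (hh : 0 < h)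
    {L : Language α} {ℓ' : ℕ} :
    IsUnivLength (langSubst C L) ℓ' ↔ ∃ ℓ, IsUnivLength L ℓ ∧ ℓ' = h * ℓ := by
  constructor
  · intro hU
    obtain ⟨b⟩ := ‹Nonempty β›
    obtain ⟨u, -, hu⟩ := hU (List.replicate ℓ' b) List.length_replicate
    have hℓ' : ℓ' = h * u.length := List.length_replicate.symm.trans (hC.length_of_mem_prod hu)
    exact ⟨u.length, (hC.isUnivLength_langSubst_mul_iff hh).1 (hℓ' ▸ hU), hℓ'⟩
  · rintro ⟨ℓ, hU, rfl⟩
    exact (hC.isUnivLength_langSubst_mul_iff hh).2 hU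

end IsBlockCode

end BlockCode

section PrefixCode

variable {β : Type*}

lemma symCount_prod (l : List (RegularExpression β)) :
    symCount l.prod = (l.map symCount).sum := by
  induction l with
  | nil => rfl
  | cons r l ih => exact congrArg (symCount r + ·) ih

lemma symCount_sum (l : List (RegularExpression β)) :
    symCount l.sum = (l.map symCount).sum := by
  induction l with
  | nil => rfl
  | cons r l ih => exact congrArg (symCount r + ·) ih

lemma matches'_prod_map_char (v : List β) :
    (v.map RegularExpression.char).prod.matches' = {v} := by
  induction v with
  | nil => rfl
  | cons a v ih =>
    rw [List.map_cons, List.prod_cons, RegularExpression.matches'_mul, ih]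
    exact Set.image2_singleton

lemma mem_matches'_sum_map_char {l : List β} {w : List β} :
    w ∈ (l.map RegularExpression.char).sum.matches' ↔ ∃ b ∈ l, w = [b] := by
  induction l with
  | nil => simp
  | cons a l ih =>
    rw [List.map_cons, List.sum_cons, RegularExpression.matches'_add, Language.mem_add, ih,
      List.exists_mem_cons_iff]
    rfl

/-- The regular expression `v · (b₁ + ⋯ + bₛ)` for the words that extend `v` by one letter
of `B = {b₁, …, bₛ}`. -/
noncomputable def snocRegex (v : List β) (B : Finset β) : RegularExpression β :=
  (v.map .char).prod * (B.toList.map .char).sum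

lemma symCount_snocRegex (v : List β) (B : Finset β) :
    symCount (snocRegex v B) = v.length + B.card := by
  change symCount (v.map .char).prod + symCount (B.toList.map .char).sum = _
  have symCount_comp_char : symCount ∘ RegularExpression.char = fun _ : β ↦ 1 := rfl
  simp [symCount_prod, symCount_sum, symCount_comp_char]

lemma mem_matches'_snocRegex {v : List β} {B : Finset β} {w : List β} :
    w ∈ (snocRegex v B).matches' ↔ ∃ b ∈ B, w = v ++ [b] := by
  rw [snocRegex, RegularExpression.matches'_mul, matches'_prod_map_char, Language.mem_mul]
  simp only [mem_matches'_sum_map_char, Finset.mem_toList]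
  constructor
  · rintro ⟨_, rfl, _, ⟨b, hb, rfl⟩, rfl⟩
    exact ⟨b, hb, rfl⟩
  · rintro ⟨b, hb, rfl⟩
    exact ⟨v, rfl, [b], ⟨b, hb, rfl⟩, rfl⟩

lemma exists_surjective_prod_forall_eq_fst {V σ : Type*} [Fintype V] [Fintype β] [Nonempty β]
    [Fintype σ] (hV : Fintype.card V ≤ Fintype.card σ)
    (hσ : Fintype.card σ ≤ Fintype.card (V × β)) :
    ∃ (d : V × β → σ) (p : σ → V), Function.Surjective d ∧ ∀ x, p (d x) = x.1 := by
  classical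
  obtain ⟨b₀⟩ := ‹Nonempty β›
  let row : V ↪ V × β := ⟨fun v ↦ (v, b₀), fun _ _ h ↦ congrArg Prod.fst h⟩
  obtain ⟨T, row_subset, hT⟩ := Finset.exists_superset_card_eq (s := Finset.univ.map row)
    (by simpa using hV) hσ
  have row_mem (v : V) : (v, b₀) ∈ T := row_subset (Finset.mem_map_of_mem row (Finset.mem_univ v))
  let e : T ≃ σ := Fintype.equivOfCardEq (by simpa using hT)
  -- Redirecting within a row keeps the first component of `x` recoverable from its letter.
  let retract (x : V × β) : T := if hx : x ∈ T then ⟨x, hx⟩ else ⟨(x.1, b₀), row_mem x.1⟩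
  refine ⟨fun x ↦ e (retract x), fun a ↦ (e.symm a).1.1, fun a ↦ ⟨e.symm a, ?_⟩, fun x ↦ ?_⟩
  · simp [retract]
  · simp only [retract, Equiv.symm_apply_apply]
    split <;> rfl

variable [Fintype β] {σ : Type*} [DecidableEq σ] {m : ℕ} {d : List.Vector β m × β → σ}
  {p : σ → List.Vector β m}

lemma mem_matches'_snocRegex_fiber (hp : ∀ x, p (d x) = x.1) {a : σ} {w : List β} :
    w ∈ (snocRegex (p a).toList {b | d (p a, b) = a}).matches' ↔
      ∃ x, d x = a ∧ w = x.1.toList ++ [x.2] := by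
  simp only [mem_matches'_snocRegex, Finset.mem_filter_univ]
  constructor
  · rintro ⟨b, hb, rfl⟩
    exact ⟨(p a, b), hb, rfl⟩
  · rintro ⟨x, rfl, rfl⟩
    exact ⟨x.2, by rw [hp], by rw [hp]⟩

lemma isBlockCode_snocRegex_fiber (hd : Function.Surjective d) (hp : ∀ x, p (d x) = x.1) :
    IsBlockCode (fun a ↦ (snocRegex (p a).toList {b | d (p a, b) = a}).matches') (m + 1) where
  length_eq ha := by
    obtain ⟨x, -, rfl⟩ := (mem_matches'_snocRegex_fiber hp).1 ha
    simp
  nonempty a := by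
    obtain ⟨x, hx⟩ := hd a
    exact ⟨_, (mem_matches'_snocRegex_fiber hp).2 ⟨x, hx, rfl⟩⟩
  existsUnique_mem w hw := by
    obtain rfl | ⟨v, b, rfl⟩ := w.eq_nil_or_concat'
    · cases hw
    have hv : v.length = m := by simpa using hw
    refine ⟨d (⟨v, hv⟩, b), (mem_matches'_snocRegex_fiber hp).2 ⟨_, rfl, rfl⟩, fun a ha ↦ ?_⟩
    obtain ⟨x, rfl, hx⟩ := (mem_matches'_snocRegex_fiber hp).1 ha
    obtain ⟨hx₁, hx₂⟩ := List.append_inj' hx rfl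
    exact congrArg d (Prod.ext (Subtype.ext hx₁.symm) (List.singleton_inj.1 hx₂).symm)

lemma card_filter_apply_eq_le [Nontrivial σ] {d : List.Vector Bool m × Bool → σ}
    (hd : Function.Surjective d) (v : List.Vector Bool m) (a : σ) :
    Finset.card {b | d (v, b) = a} ≤ m + 1 := by
  cases m with
  | zero =>
    -- The empty prefix `v` is shared by all letters, so some bit decodes to another letter.
    obtain ⟨a', ha'⟩ := exists_ne a
    obtain ⟨⟨v', b⟩, rfl⟩ := hd a'
    obtain rfl : v' = v := Subsingleton.elim _ _
    exact Nat.le_of_lt_succ (Finset.card_lt_univ_of_notMem (x := b) (by simpa using ha'))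
  | succ m =>
    calc Finset.card {b | d (v, b) = a} ≤ Fintype.card Bool := Finset.card_le_univ _
      _ ≤ m + 1 + 1 := by simp

lemma exists_isBlockCode_symCount_le (σ : Type*) [Fintype σ] [Nontrivial σ] :
    ∃ c : σ → RegularExpression Bool,
      IsBlockCode (fun a ↦ (c a).matches') (Nat.clog 2 (Fintype.card σ)) ∧
      ∀ a, symCount (c a) ≤ 2 * Nat.clog 2 (Fintype.card σ) - 1 := by
  classical
  obtain ⟨m, hm⟩ : ∃ m, Nat.clog 2 (Fintype.card σ) = m + 1 :=
    Nat.exists_eq_succ_of_ne_zero (Nat.clog_pos one_lt_two Fintype.one_lt_card).ne'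
  have two_pow_lt : 2 ^ m < Fintype.card σ := Nat.pow_lt_of_lt_clog (hm ▸ Nat.lt_succ_self m)
  have le_two_pow : Fintype.card σ ≤ 2 ^ (m + 1) := hm ▸ Nat.le_pow_clog one_lt_two _
  obtain ⟨d, p, hd, hp⟩ := exists_surjective_prod_forall_eq_fst (V := List.Vector Bool m)
    (β := Bool) (σ := σ) (by simpa using two_pow_lt.le) (by simpa [pow_succ] using le_two_pow)
  refine ⟨_, hm ▸ isBlockCode_snocRegex_fiber hd hp, fun a ↦ ?_⟩
  have := card_filter_apply_eq_le hd (p a) a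
  rw [symCount_snocRegex, List.Vector.toList_length, hm]
  omega

end PrefixCode

/-- Binarization of a regular expression: for an alphabet of size `k ≥ 2` and `h = ⌈log₂ k⌉`,
there is a regular expression over a two-letter alphabet with at most `(2h - 1) * n` input
symbols whose universal lengths are exactly `h * ℓ` for universal lengths `ℓ` of `r`;
consequently the minimal universality lengths are related by the factor `h`. -/
theorem regex_binarization (k n : ℕ) (hk : 2 ≤ k)
    (σ : Type) [Fintype σ] (hσ : Fintype.card σ = k)
    (r : RegularExpression σ) (hr : symCount r = n) :
    ∃ r' : RegularExpression Bool,
      symCount r' ≤ (2 * Nat.clog 2 k - 1) * n ∧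
      (∀ ℓ' : ℕ, IsUnivLength r'.matches' ℓ' ↔
          ∃ ℓ : ℕ, IsUnivLength r.matches' ℓ ∧ ℓ' = Nat.clog 2 k * ℓ) ∧
      ((∃ ℓ : ℕ, IsUnivLength r.matches' ℓ) →
        ((∃ ℓ' : ℕ, IsUnivLength r'.matches' ℓ') ∧
          sInf {ℓ' : ℕ | IsUnivLength r'.matches' ℓ'} =
            Nat.clog 2 k * sInf {ℓ : ℕ | IsUnivLength r.matches' ℓ})) := by
  subst hσ hr
  have : Nontrivial σ := Fintype.one_lt_card_iff_nontrivial.1 hk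
  obtain ⟨c, hc, symCount_le⟩ := exists_isBlockCode_symCount_le σ
  have univLength_iff (ℓ' : ℕ) : IsUnivLength (regexSubst c r).matches' ℓ' ↔
      ∃ ℓ, IsUnivLength r.matches' ℓ ∧ ℓ' = Nat.clog 2 (Fintype.card σ) * ℓ := by
    rw [matches'_regexSubst]
    exact hc.isUnivLength_langSubst_iff (Nat.clog_pos one_lt_two hk)
  have univLengths_eq : {ℓ' | IsUnivLength (regexSubst c r).matches' ℓ'} =
      (Nat.clog 2 (Fintype.card σ) * ·) '' {ℓ | IsUnivLength r.matches' ℓ} := by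
    ext ℓ'
    simp only [Set.mem_ofPred_eq, univLength_iff, Set.mem_image, eq_comm]
  refine ⟨regexSubst c r, symCount_regexSubst_le symCount_le r, univLength_iff, fun hr ↦ ⟨?_, ?_⟩⟩
  · obtain ⟨ℓ, hℓ⟩ := hr
    exact ⟨_, (univLength_iff _).2 ⟨ℓ, hℓ, rfl⟩⟩
  · rw [univLengths_eq]
    exact (Monotone.map_csInf (fun _ _ ↦ Nat.mul_le_mul_left _) hr).symm
end

section
/- Let M be a DFA with n states over a finite alphabet Σ. If there exists some ℓ ≥ 0 such that every word of length ℓ over Σ is accepted by M, then there exists such an ℓ with ℓ ≤ 2^(n²). -/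
/-!
For each `ℓ`, let `U ℓ` be the set of states from which every word of length `ℓ` is accepted. Then
`U (ℓ + 1)` depends only on `U ℓ`, so `U` is an orbit in the finite collection of sets of states,
whose number is `2 ^ n`, and each of its values is already attained at an index smaller than that.
-/

section Iterate

variable {α : Type*} [Fintype α]

theorem exists_le_card_exists_lt_map_eq (u : ℕ → α) :
    ∃ j ≤ Fintype.card α, ∃ i < j, u i = u j := by
  by_contra! hne
  have hinj : Function.Injective fun i : Fin (Fintype.card α + 1) ↦ u i :=
    Function.Injective.of_lt_imp_ne fun i j hij ↦ hne j j.is_le i hij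
  simpa using Fintype.card_le_of_injective _ hinj

theorem exists_lt_card_iterate_eq (f : α → α) (x : α) (m : ℕ) :
    ∃ k < Fintype.card α, f^[k] x = f^[m] x := by
  induction m using Nat.strong_induction_on with
  | _ m ih =>
    obtain hm | hm := lt_or_ge m (Fintype.card α)
    · exact ⟨m, hm, rfl⟩
    obtain ⟨j, hj, i, hij, heq⟩ := exists_le_card_exists_lt_map_eq (f^[·] x)
    have hjm : j ≤ m := hj.trans hm
    have hshort : f^[m - j + i] x = f^[m] x :=
      calc
        f^[m - j + i] x = f^[m - j] (f^[i] x) := Function.iterate_add_apply ..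
        _ = f^[m - j] (f^[j] x) := congrArg _ heq
        _ = f^[m] x := by rw [← Function.iterate_add_apply, Nat.sub_add_cancel hjm]
    obtain ⟨k, hk, hkx⟩ := ih (m - j + i) (by omega)
    exact ⟨k, hk, hkx.trans hshort⟩

end Iterate

section UniversalPredecessor

variable {σ Q : Type*} (M : DFA σ Q)

/-- The universal predecessor of a set `S` of states: the states all of whose successors lie in
`S`. Its iterates on `M.accept` describe the states from which all words of a given length are
accepted. -/
def univPred (S : Set Q) : Set Q :=
  {q | ∀ a, M.step q a ∈ S}

theorem mem_univPred {S : Set Q} {q : Q} : q ∈ univPred M S ↔ ∀ a, M.step q a ∈ S :=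
  Iff.rfl

theorem mem_iterate_univPred {S : Set Q} {q : Q} {k : ℕ} :
    q ∈ (univPred M)^[k] S ↔ ∀ w : List σ, w.length = k → M.evalFrom q w ∈ S := by
  induction k generalizing q with
  | zero => simp
  | succ k ih =>
    calc
      q ∈ (univPred M)^[k + 1] S ↔ ∀ a, M.step q a ∈ (univPred M)^[k] S := by
        rw [Function.iterate_succ_apply', mem_univPred]
      _ ↔ ∀ a, ∀ w : List σ, w.length = k → M.evalFrom (M.step q a) w ∈ S :=
        forall_congr' fun _ ↦ ih
      _ ↔ ∀ w : List σ, w.length = k + 1 → M.evalFrom q w ∈ S := by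
        refine ⟨?_, fun h a w hw ↦ h (a :: w) (congrArg Nat.succ hw)⟩
        rintro h (_ | ⟨a, w⟩) hw
        · cases hw
        · exact h a w (Nat.succ.inj hw)

theorem isUnivLength_accepts_iff {ℓ : ℕ} :
    IsUnivLength M.accepts ℓ ↔ M.start ∈ (univPred M)^[ℓ] M.accept :=
  (mem_iterate_univPred M).symm

theorem dfa_univ_length_le_general [Fintype Q] (h : ∃ ℓ, IsUnivLength M.accepts ℓ) :
    ∃ ℓ < 2 ^ Fintype.card Q, IsUnivLength M.accepts ℓ := by
  classical
  simp only [isUnivLength_accepts_iff] at h ⊢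
  obtain ⟨m, hm⟩ := h
  obtain ⟨ℓ, hℓ, heq⟩ := exists_lt_card_iterate_eq (univPred M) M.accept m
  rw [Fintype.card_set] at hℓ
  exact ⟨ℓ, hℓ, heq ▸ hm⟩

end UniversalPredecessor

/-- If a DFA with `n` states has some universal length, then it has one of size at most
`2 ^ (n ^ 2)`. -/
theorem dfa_univ_length_le (σ Q : Type) [Fintype σ] [Fintype Q] (n : ℕ)
    (hQ : Fintype.card Q = n) (M : DFA σ Q)
    (h : ∃ ℓ : ℕ, IsUnivLength M.accepts ℓ) :
    ∃ ℓ : ℕ, ℓ ≤ 2 ^ (n ^ 2) ∧ IsUnivLength M.accepts ℓ := by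
  obtain ⟨ℓ, hlt, hℓ⟩ := dfa_univ_length_le_general M h
  have hpow : 2 ^ Fintype.card Q ≤ 2 ^ n ^ 2 :=
    hQ ▸ Nat.pow_le_pow_right two_pos (Nat.le_self_pow two_ne_zero _)
  exact ⟨ℓ, hlt.le.trans hpow, hℓ⟩
end

section
/- For every ε > 0 there exists N such that for all n ≥ N the following holds: for every DFA M with n states over any finite nonempty alphabet Σ, if M has a universal length, then its minimal universality length is at most exp((1 + ε)·√(n·log n)). -/
/-!
Take a maximal family of pairwise disjoint cycles in the transition graph; their lengths sum to at
most `n`, so by Landau's bound the least common multiple `P` of these lengths is at most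
`exp ((1 + o(1)) √(n log n))`. A word of length at least `n` runs through some cycle, hence by
maximality through a state of a chosen cycle, and pumping there lengthens it by `P` without changing
the state it ends in. So if `ℓ ≥ n` and `ℓ + P` is universal then `ℓ` is too, and the minimal
universality length is at most `n + P`.

For Landau's bound, write `log (lcm f)` as the sum of `Λ d` over the divisors `d` of the lcm and
weight each term by `min 1 (d / x)` and `1 - min 1 (d / x)` with `x = √(n log n)`. Every prime power
dividing the lcm divides some `f i`, so the first part is at most `(log x / x) ∑ f i ≈ x / 2`; the
second is at most `x⁻¹ ∫ ψ` over `[0, x]`, asymptotically at most `x / 2` because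
`ψ t ≤ (1 + o(1)) t`. The latter is the upper half of the Wiener–Ikehara theorem: averaging
`ψ (exp v) exp (-v)` against a kernel with compactly supported Fourier transform, the
Riemann–Lebesgue lemma leaves only the contribution of the pole of the logarithmic derivative of
`ζ` at `1`.
-/

open MeasureTheory Set Filter Topology FourierTransform
open scoped SchwartzMap ContDiff ComplexConjugate ArithmeticFunction.vonMangoldt

/-- A probability density on `ℝ` with compactly supported Fourier transform, the kind of kernel
against which the Wiener–Ikehara argument averages. By Fourier inversion we may ask instead that `K`
be the transform of a continuous compactly supported `φ`, which is the form used. -/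
structure IsBandLimitedKernel (K : ℝ → ℝ) : Prop where
  nonneg : ∀ v, 0 ≤ K v
  integrable : Integrable K
  integral_eq_one : ∫ v, K v = 1
  exists_fourier : ∃ φ : ℝ → ℂ, Continuous φ ∧ HasCompactSupport φ ∧ 𝓕 φ = fun v => (K v : ℂ)

lemma conj_fourier_of_even {g : ℝ → ℝ} (hg : ∀ t, g (-t) = g t) (v : ℝ) :
    conj (𝓕 (fun t => (g t : ℂ)) v) = 𝓕 (fun t => (g t : ℂ)) v := by
  rw [Real.fourier_real_eq, ← integral_conj, ← integral_neg_eq_self]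
  refine integral_congr_ae (.of_forall fun t => ?_)
  simp [Circle.smul_def, hg, ← Circle.coe_inv_eq_conj, ← AddChar.map_neg_eq_inv]

lemma fourier_comp_div (φ : ℝ → ℂ) {a : ℝ} (ha : 0 < a) (v : ℝ) :
    𝓕 (fun t => φ (t / a)) v = a * 𝓕 φ (a * v) := by
  have h := Measure.integral_comp_div (fun t => Real.fourierChar (-(t * (a * v))) • φ t) a
  rw [abs_of_pos ha, ← Real.fourier_real_eq, Complex.real_smul] at h
  rw [← h, Real.fourier_real_eq]
  refine integral_congr_ae (.of_forall fun t => ?_)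
  simp only [show t / a * (a * v) = t * v by field_simp]

lemma exists_contDiff_even_integral_eq_one :
    ∃ g : ℝ → ℝ, ContDiff ℝ ∞ g ∧ HasCompactSupport g ∧ (∀ t, g (-t) = g t) ∧ ∫ t, g t = 1 :=
  let f : ContDiffBump (0 : ℝ) := default
  ⟨f.normed volume, f.contDiff_normed, f.hasCompactSupport_normed, f.normed_neg, f.integral_normed⟩

namespace IsBandLimitedKernel

lemma comp_mul_left {K : ℝ → ℝ} (hK : IsBandLimitedKernel K) {a : ℝ} (ha : 0 < a) :
    IsBandLimitedKernel fun v => a * K (a * v) where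
  nonneg v := mul_nonneg ha.le (hK.nonneg _)
  integrable := (hK.integrable.comp_mul_left' ha.ne').const_mul a
  integral_eq_one := by
    rw [integral_const_mul, Measure.integral_comp_mul_left, abs_of_pos (inv_pos.2 ha),
      hK.integral_eq_one, smul_eq_mul, mul_one, mul_inv_cancel₀ ha.ne']
  exists_fourier := by
    obtain ⟨φ, hφ, hφc, hφK⟩ := hK.exists_fourier
    refine ⟨fun t => φ (t / a), by fun_prop, ?_, ?_⟩
    · simpa [div_eq_inv_mul] using hφc.comp_smul (inv_ne_zero ha.ne')
    · ext v
      simp [fourier_comp_div φ ha, hφK]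

lemma of_fourier_nonneg {h : ℝ → ℝ} (hnonneg : ∀ v, 0 ≤ h v) (hint : Integrable h)
    (hpos : 0 < ∫ v, h v) {φ : ℝ → ℂ} (hφ : Continuous φ) (hφc : HasCompactSupport φ)
    (hφh : 𝓕 φ = fun v => (h v : ℂ)) : IsBandLimitedKernel fun v => (∫ u, h u)⁻¹ * h v where
  nonneg v := mul_nonneg (inv_nonneg.2 hpos.le) (hnonneg v)
  integrable := hint.const_mul _
  integral_eq_one := by rw [integral_const_mul, inv_mul_cancel₀ hpos.ne']
  exists_fourier := by
    refine ⟨((∫ u, h u : ℝ) : ℂ)⁻¹ • φ, hφ.const_smul _, hφc.smul_left, ?_⟩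
    ext v
    have hsmul : 𝓕 (((∫ u, h u : ℝ) : ℂ)⁻¹ • φ) = ((∫ u, h u : ℝ) : ℂ)⁻¹ • 𝓕 φ :=
      VectorFourier.fourierIntegral_const_smul _ _ _ _ _
    simp [hsmul, hφh]

end IsBandLimitedKernel

theorem exists_isBandLimitedKernel : ∃ K, IsBandLimitedKernel K := by
  obtain ⟨g, hg, hgc, heven, hgint⟩ := exists_contDiff_even_integral_eq_one
  set G : ℝ → ℂ := fun t => (g t : ℂ) with hG
  have hGc : HasCompactSupport G := hgc.comp_left Complex.ofReal_zero
  have hGd : ContDiff ℝ ∞ G := Complex.ofRealCLM.contDiff.comp hg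
  let S := hGc.toSchwartzMap hGd
  have hS : 𝓕 G = ⇑(𝓕 S : 𝓢(ℝ, ℂ)) := (SchwartzMap.fourier_coe S).symm
  have hGi : Integrable G := S.integrable
  have hre (v) : 𝓕 G v = ((𝓕 G v).re : ℂ) :=
    (Complex.conj_eq_iff_re.1 (conj_fourier_of_even heven v)).symm
  have hcont : Continuous fun v => (𝓕 G v).re := by
    rw [hS]; fun_prop
  have hint : Integrable fun v => (𝓕 G v).re ^ 2 := by
    have : MemLp (fun v => 𝓕 G v) 2 := hS ▸ (𝓕 S : 𝓢(ℝ, ℂ)).memLp 2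
    exact this.re.integrable_sq
  have h0 : 𝓕 G 0 = 1 := by
    simp [Real.fourier_real_eq, hG, integral_complex_ofReal, hgint]
  refine ⟨_, .of_fourier_nonneg (fun v => sq_nonneg (𝓕 G v).re) hint ?_
    (hGc.continuous_convolution_right (L := .mul ℂ ℂ) hGi.locallyIntegrable hGd.continuous)
    (hGc.convolution (.mul ℂ ℂ) hGc) ?_⟩
  · exact integral_pos_of_integrable_nonneg_nonzero (x := 0) (hcont.pow 2) hint
      (fun v => sq_nonneg _) (by simp [h0])
  · ext v
    rw [Real.fourier_mul_convolution_eq hGi hGi, ← sq, Complex.ofReal_pow, ← hre]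

/-- The (one-sided) Laplace transform `∫ v in (0, ∞), exp (-z v) b v`. -/
noncomputable def laplaceTransform (b : ℝ → ℂ) (z : ℂ) : ℂ :=
  ∫ v in Ioi (0 : ℝ), Complex.exp (-z * v) * b v

lemma fourier_fourierChar_smul (φ : ℝ → ℂ) (v w : ℝ) :
    𝓕 (fun t => Real.fourierChar (t * w) • φ t) v = 𝓕 φ (v - w) := by
  simp only [Real.fourier_real_eq, smul_smul, ← AddChar.map_add_eq_mul]
  simp only [mul_sub, neg_sub, neg_add_eq_sub]

lemma fourier_indicator_exp_mul (b : ℝ → ℂ) (η t : ℝ) :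
    𝓕 ((Ioi (0 : ℝ)).indicator fun v => Complex.exp (-η * v) * b v) t =
      laplaceTransform b (η + 2 * Real.pi * t * Complex.I) := by
  rw [Real.fourier_real_eq_integral_exp_smul, laplaceTransform,
    ← integral_indicator measurableSet_Ioi]
  congr 1 with v
  by_cases hv : v ∈ Ioi (0 : ℝ)
  · simp only [indicator_of_mem hv, smul_eq_mul, ← mul_assoc, ← Complex.exp_add]
    push_cast
    ring_nf
  · simp only [indicator_of_notMem hv, smul_zero]

lemma integrableOn_exp_neg_mul {b : ℝ → ℂ} (hb : AEStronglyMeasurable b) {B : ℝ}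
    (hB : ∀ v, ‖b v‖ ≤ B) {z : ℂ} (hz : 0 < z.re) :
    IntegrableOn (fun v : ℝ => Complex.exp (-z * v) * b v) (Ioi 0) :=
  (integrableOn_exp_mul_complex_Ioi (by simpa using hz) 0).mul_bdd hb.restrict (.of_forall hB)

lemma integral_exp_neg_mul_mul_fourier_sub {b : ℝ → ℂ} (hb : AEStronglyMeasurable b) {B : ℝ}
    (hB : ∀ v, ‖b v‖ ≤ B) {η : ℝ} (hη : 0 < η) {φ : ℝ → ℂ} (hφ : Integrable φ) (w : ℝ) :
    ∫ v in Ioi (0 : ℝ), Complex.exp (-η * v) * (b v * 𝓕 φ (v - w)) =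
      𝓕 (fun t => φ t * laplaceTransform b (η + 2 * Real.pi * t * Complex.I)) (-w) := by
  set f : ℝ → ℂ := (Ioi 0).indicator fun v => Complex.exp (-η * v) * b v
  set g : ℝ → ℂ := fun t => Real.fourierChar (t * w) • φ t
  have hf : Integrable f :=
    (integrable_indicator_iff measurableSet_Ioi).2
      (integrableOn_exp_neg_mul hb hB (by simpa using hη))
  have hg : Integrable g := by
    simpa [g, mul_comm] using (Real.fourierIntegral_convergent_iff (-w)).2 hφ
  have hself : ∫ t, 𝓕 f t • g t = ∫ v, f v • 𝓕 g v := by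
    simpa using! VectorFourier.integral_fourierIntegral_smul_eq_flip (L := innerₗ ℝ)
      Real.continuous_fourierChar continuous_inner hf hg
  rw [Real.fourier_real_eq, ← integral_indicator measurableSet_Ioi]
  convert! hself.symm using 2 with v t
  · ext v
    simp only [f, g, fourier_fourierChar_smul, indicator_apply]
    split_ifs <;> simp [mul_assoc]
  · ext t
    simp only [f, g, fourier_indicator_exp_mul]
    simp only [mul_neg, neg_neg, Circle.smul_def, smul_eq_mul]
    ring

lemma tendsto_integral_exp_neg_mul {f : ℝ → ℂ} (hf : IntegrableOn f (Ioi 0)) :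
    Tendsto (fun η : ℝ => ∫ v in Ioi (0 : ℝ), Complex.exp (-η * v) * f v) (𝓝[>] 0)
      (𝓝 (∫ v in Ioi (0 : ℝ), f v)) := by
  refine tendsto_integral_filter_of_dominated_convergence (fun v => ‖f v‖) ?_ ?_ hf.norm ?_
  · exact .of_forall fun η => (by fun_prop : Continuous _).aestronglyMeasurable.mul hf.1
  · filter_upwards [self_mem_nhdsWithin] with η (hη : 0 < η)
    filter_upwards [ae_restrict_mem measurableSet_Ioi] with v (hv : 0 < v)
    rw [norm_mul, Complex.norm_exp]
    refine mul_le_of_le_one_left (norm_nonneg _) (Real.exp_le_one_iff.2 ?_)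
    simpa using (mul_pos hη hv).le
  · refine .of_forall fun v => ?_
    have : Continuous fun η : ℝ => Complex.exp (-η * v) * f v := by fun_prop
    simpa using (this.tendsto 0).mono_left nhdsWithin_le_nhds

lemma tendsto_fourier_mul_vertical {φ : ℝ → ℂ} (hφ : Continuous φ) (hφc : HasCompactSupport φ)
    {G : ℂ → ℂ} (hG : ContinuousOn G {z | 0 ≤ z.re}) (x : ℝ) :
    Tendsto (fun η : ℝ => 𝓕 (fun t => φ t * G (η + 2 * Real.pi * t * Complex.I)) x) (𝓝[>] 0)
      (𝓝 (𝓕 (fun t => φ t * G (2 * Real.pi * t * Complex.I)) x)) := by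
  have hcont : ContinuousOn (fun η : ℝ => 𝓕 (fun t => φ t * G (η + 2 * Real.pi * t * Complex.I)) x)
      (Ici 0) := by
    simp only [Real.fourier_real_eq_integral_exp_smul]
    refine continuousOn_integral_of_compact_support hφc ?_ fun η t _ ht => ?_
    · have hG' : ContinuousOn (fun p : ℝ × ℝ => G (p.1 + 2 * Real.pi * p.2 * Complex.I))
          (Ici 0 ×ˢ univ) :=
        hG.comp (by fun_prop) fun p hp => by simpa using hp.1
      have hexp : Continuous fun p : ℝ × ℝ =>
          Complex.exp ((-2 * Real.pi * p.2 * x : ℝ) * Complex.I) := by fun_prop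
      exact hexp.continuousOn.smul ((hφ.comp continuous_snd).continuousOn.mul hG')
    · simp [image_eq_zero_of_notMem_tsupport ht]
  simpa using (hcont 0 self_mem_Ici).tendsto.mono_left (nhdsWithin_mono _ Ioi_subset_Ici_self)

/-- The limit `η → 0` of `integral_exp_neg_mul_mul_fourier_sub`: on the imaginary axis the Laplace
integral may diverge, and its continuous extension `G` takes its place. -/
lemma integral_mul_fourier_sub {b : ℝ → ℂ} (hb : AEStronglyMeasurable b) {B : ℝ}
    (hB : ∀ v, ‖b v‖ ≤ B) {G : ℂ → ℂ} (hG : ContinuousOn G {z | 0 ≤ z.re})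
    (hGb : EqOn G (laplaceTransform b) {z | 0 < z.re}) {φ : ℝ → ℂ} (hφ : Continuous φ)
    (hφc : HasCompactSupport φ) (hφi : Integrable (𝓕 φ)) (w : ℝ) :
    ∫ v in Ioi (0 : ℝ), b v * 𝓕 φ (v - w) =
      𝓕 (fun t => φ t * G (2 * Real.pi * t * Complex.I)) (-w) := by
  have hint : Integrable fun v => b v * 𝓕 φ (v - w) :=
    (hφi.comp_sub_right w).bdd_mul hb (.of_forall hB)
  refine tendsto_nhds_unique (tendsto_integral_exp_neg_mul hint.integrableOn)
    ((tendsto_fourier_mul_vertical hφ hφc hG (-w)).congr' ?_)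
  filter_upwards [self_mem_nhdsWithin] with η (hη : 0 < η)
  rw [integral_exp_neg_mul_mul_fourier_sub hb hB hη (hφ.integrable_of_hasCompactSupport hφc)]
  congr! 3 with t
  exact hGb (by simpa using hη)

theorem tendsto_integral_mul_fourier_sub {b : ℝ → ℂ} (hb : AEStronglyMeasurable b) {B : ℝ}
    (hB : ∀ v, ‖b v‖ ≤ B) {G : ℂ → ℂ} (hG : ContinuousOn G {z | 0 ≤ z.re})
    (hGb : EqOn G (laplaceTransform b) {z | 0 < z.re}) {φ : ℝ → ℂ} (hφ : Continuous φ)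
    (hφc : HasCompactSupport φ) (hφi : Integrable (𝓕 φ)) :
    Tendsto (fun w => ∫ v in Ioi (0 : ℝ), b v * 𝓕 φ (v - w)) atTop (𝓝 0) := by
  simp only [integral_mul_fourier_sub hb hB hG hGb hφ hφc hφi]
  exact (Real.zero_at_infty_fourier _).comp (tendsto_neg_atTop_atBot.mono_right atBot_le_cocompact)

namespace IsBandLimitedKernel

lemma tendsto_integral_mul {K : ℝ → ℝ} (hK : IsBandLimitedKernel K) {b : ℝ → ℝ}
    (hb : Measurable b) {B : ℝ} (hB : ∀ v, |b v| ≤ B) {G : ℂ → ℂ}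
    (hG : ContinuousOn G {z | 0 ≤ z.re})
    (hGb : EqOn G (laplaceTransform fun v => b v) {z | 0 < z.re}) :
    Tendsto (fun w => ∫ v in Ioi (0 : ℝ), b v * K (v - w)) atTop (𝓝 0) := by
  obtain ⟨φ, hφ, hφc, hφK⟩ := hK.exists_fourier
  have hlim := tendsto_integral_mul_fourier_sub (b := fun v => (b v : ℂ)) (by fun_prop)
    (fun v => by simpa using hB v) hG hGb hφ hφc (hφK ▸ hK.integrable.ofReal)
  simpa [hφK, ← Complex.ofReal_mul, integral_complex_ofReal, Function.comp_def] using
    (Complex.continuous_re.tendsto 0).comp hlim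

lemma exists_lt_intervalIntegral {δ : ℝ} (hδ : 0 < δ) :
    ∃ K, IsBandLimitedKernel K ∧ 1 - δ < ∫ v in -δ..δ, K v := by
  obtain ⟨K, hK⟩ := exists_isBandLimitedKernel
  have hδa : Tendsto (fun a : ℝ => a * δ) atTop atTop := tendsto_id.atTop_mul_const hδ
  have hlim := intervalIntegral_tendsto_integral hK.integrable
    (tendsto_neg_atTop_atBot.comp hδa) hδa
  rw [hK.integral_eq_one] at hlim
  obtain ⟨a, ha, hmass⟩ :=
    ((eventually_gt_atTop 0).and (hlim.eventually (lt_mem_nhds (sub_lt_self 1 hδ)))).exists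
  refine ⟨_, hK.comp_mul_left ha, ?_⟩
  simpa using hmass

/-- On `[w - δ, w + δ]` monotonicity bounds `S v * exp (-v)` below by its value at the left end, up
to the factor `exp (-2δ)`. -/
lemma mul_exp_neg_mul_le_integral {K : ℝ → ℝ} (hK : IsBandLimitedKernel K) {S : ℝ → ℝ}
    (hS : Monotone S) (hS0 : ∀ v, 0 ≤ S v) {w δ : ℝ} (hδ : 0 ≤ δ) (hw : δ ≤ w)
    (hint : IntegrableOn (fun v => S v * Real.exp (-v) * K (v - w)) (Ioi 0)) :
    S (w - δ) * Real.exp (-(w - δ)) * (Real.exp (-(2 * δ)) * ∫ v in -δ..δ, K v) ≤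
      ∫ v in Ioi 0, S v * Real.exp (-v) * K (v - w) := by
  have hsub : Ioc (w - δ) (w + δ) ⊆ Ioi 0 := fun v hv => by
    rw [mem_Ioi]
    linarith [hv.1]
  calc S (w - δ) * Real.exp (-(w - δ)) * (Real.exp (-(2 * δ)) * ∫ v in -δ..δ, K v)
      = S (w - δ) * Real.exp (-(w + δ)) * ∫ v in Ioc (w - δ) (w + δ), K (v - w) := by
        rw [← intervalIntegral.integral_of_le (by linarith),
          intervalIntegral.integral_comp_sub_right K w, show -(w + δ) = -(w - δ) + -(2 * δ) by ring,
          Real.exp_add]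
        ring_nf
    _ = ∫ v in Ioc (w - δ) (w + δ), S (w - δ) * Real.exp (-(w + δ)) * K (v - w) :=
        (integral_const_mul _ _).symm
    _ ≤ ∫ v in Ioc (w - δ) (w + δ), S v * Real.exp (-v) * K (v - w) := by
        refine setIntegral_mono_on ((hK.integrable.comp_sub_right w).const_mul _).integrableOn
          (hint.mono_set hsub) measurableSet_Ioc fun v hv => ?_
        have := hS0 v
        have := hK.nonneg (v - w)
        gcongr
        exacts [hS hv.1.le, hv.2]
    _ ≤ ∫ v in Ioi 0, S v * Real.exp (-v) * K (v - w) :=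
        setIntegral_mono_set hint
          (.of_forall fun v => mul_nonneg (mul_nonneg (hS0 v) (Real.exp_nonneg _)) (hK.nonneg _))
          hsub.eventuallyLE

end IsBandLimitedKernel

section Tauberian

variable {S : ℝ → ℝ} {B c : ℝ} {G : ℂ → ℂ}

lemma abs_mul_exp_neg_le (hS0 : ∀ v, 0 ≤ S v) (hSB : ∀ v, S v ≤ B * Real.exp v) (v : ℝ) :
    |S v * Real.exp (-v)| ≤ B := by
  rw [abs_of_nonneg (mul_nonneg (hS0 v) (Real.exp_nonneg _)), Real.exp_neg, ← div_eq_mul_inv,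
    div_le_iff₀ (Real.exp_pos v)]
  exact hSB v

lemma eventually_mul_exp_neg_mul_le (hS : Monotone S) (hS0 : ∀ v, 0 ≤ S v)
    (hSB : ∀ v, S v ≤ B * Real.exp v) (hc : 0 ≤ c) (hG : ContinuousOn G {z | 0 ≤ z.re})
    (hGS : EqOn G (laplaceTransform fun v => ((S v * Real.exp (-v) - c : ℝ) : ℂ)) {z | 0 < z.re})
    {δ : ℝ} (hδ : 0 < δ) :
    ∀ᶠ v in atTop, S v * Real.exp (-v) * (Real.exp (-(2 * δ)) * (1 - δ)) ≤ c + δ := by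
  obtain ⟨K, hK, hmass⟩ := IsBandLimitedKernel.exists_lt_intervalIntegral hδ
  have hb : Measurable fun v => S v * Real.exp (-v) - c := by
    have := hS.measurable
    fun_prop
  have hbB (v) : |S v * Real.exp (-v) - c| ≤ B + |c| :=
    (abs_sub _ _).trans (by gcongr; exact abs_mul_exp_neg_le hS0 hSB v)
  have hsmall := (hK.tendsto_integral_mul hb hbB hG hGS).eventually (gt_mem_nhds hδ)
  have hshift : Tendsto (fun v => v + δ) atTop atTop := tendsto_atTop_add_const_right _ _ tendsto_id
  filter_upwards [hshift.eventually hsmall, eventually_ge_atTop 0] with v hv hv0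
  have hKi : Integrable fun u => K (u - (v + δ)) := hK.integrable.comp_sub_right _
  have hbK : Integrable fun u => (S u * Real.exp (-u) - c) * K (u - (v + δ)) :=
    hKi.bdd_mul hb.aestronglyMeasurable (.of_forall hbB)
  have hsplit : (fun u => S u * Real.exp (-u) * K (u - (v + δ))) =
      fun u => (S u * Real.exp (-u) - c) * K (u - (v + δ)) + c * K (u - (v + δ)) := by
    ext u
    ring
  have hlower := hK.mul_exp_neg_mul_le_integral hS hS0 hδ.le (w := v + δ) (by linarith)
    (hsplit ▸ (hbK.add (hKi.const_mul c)).integrableOn)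
  have hmassle : ∫ u in Ioi 0, K (u - (v + δ)) ≤ 1 := by
    refine (setIntegral_le_integral hKi (.of_forall fun u => hK.nonneg _)).trans_eq ?_
    rw [integral_sub_right_eq_self K, hK.integral_eq_one]
  rw [hsplit, integral_add hbK.integrableOn (hKi.const_mul c).integrableOn, integral_const_mul,
    add_sub_cancel_right] at hlower
  have hq : 0 ≤ S v * Real.exp (-v) := mul_nonneg (hS0 v) (Real.exp_nonneg _)
  calc S v * Real.exp (-v) * (Real.exp (-(2 * δ)) * (1 - δ))
      ≤ S v * Real.exp (-v) * (Real.exp (-(2 * δ)) * ∫ u in -δ..δ, K u) := by gcongr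
    _ ≤ _ := hlower
    _ ≤ δ + c * 1 := by gcongr
    _ = c + δ := by ring

theorem eventually_mul_exp_neg_le (hS : Monotone S) (hS0 : ∀ v, 0 ≤ S v)
    (hSB : ∀ v, S v ≤ B * Real.exp v) (hc : 0 ≤ c) (hG : ContinuousOn G {z | 0 ≤ z.re})
    (hGS : EqOn G (laplaceTransform fun v => ((S v * Real.exp (-v) - c : ℝ) : ℂ)) {z | 0 < z.re})
    {ε : ℝ} (hε : 0 < ε) : ∀ᶠ v in atTop, S v * Real.exp (-v) ≤ c + ε := by
  have hcont : Continuous fun δ : ℝ => (c + ε) * (Real.exp (-(2 * δ)) * (1 - δ)) - (c + δ) := by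
    fun_prop
  obtain ⟨δ, hδ0, hδ, hδ1⟩ : ∃ δ : ℝ, 0 < δ ∧
      0 < (c + ε) * (Real.exp (-(2 * δ)) * (1 - δ)) - (c + δ) ∧ δ < 1 :=
    (eventually_mem_nhdsWithin.and (((hcont.tendsto 0).mono_left nhdsWithin_le_nhds).eventually
      (lt_mem_nhds (by simpa using hε)) |>.and (nhdsWithin_le_nhds (gt_mem_nhds one_pos)))).exists
        (f := 𝓝[>] 0)
  filter_upwards [eventually_mul_exp_neg_mul_le hS hS0 hSB hc hG hGS hδ0] with v hv
  have hpos : 0 < Real.exp (-(2 * δ)) * (1 - δ) := mul_pos (Real.exp_pos _) (by linarith)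
  exact le_of_mul_le_mul_right (by linarith) hpos

end Tauberian

lemma laplaceTransform_const (c : ℂ) {z : ℂ} (hz : 0 < z.re) :
    laplaceTransform (fun _ => c) z = c / z := by
  rw [laplaceTransform, integral_mul_const, integral_exp_mul_complex_Ioi (by simpa using hz)]
  simp [div_eq_inv_mul]

lemma laplaceTransform_sub_const {b : ℝ → ℂ} (hb : AEStronglyMeasurable b) {B : ℝ}
    (hB : ∀ v, ‖b v‖ ≤ B) (c : ℂ) {z : ℂ} (hz : 0 < z.re) :
    laplaceTransform (fun v => b v - c) z = laplaceTransform b z - c / z := by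
  rw [← laplaceTransform_const c hz]
  simp only [laplaceTransform, mul_sub]
  exact integral_sub (integrableOn_exp_neg_mul hb hB hz)
    (integrableOn_exp_neg_mul aestronglyMeasurable_const (fun _ => le_rfl) hz)

section WienerIkehara

variable {a : ℕ → ℝ} {B : ℝ}

lemma monotone_sum_Icc_floor_exp (ha : ∀ n, 0 ≤ a n) :
    Monotone fun v => ∑ k ∈ Finset.Icc 1 ⌊Real.exp v⌋₊, a k := fun _ _ huv =>
  Finset.sum_le_sum_of_subset_of_nonneg
    (Finset.Icc_subset_Icc_right (Nat.floor_mono (Real.exp_le_exp.2 huv))) fun k _ _ => ha k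

lemma sum_Icc_floor_exp_le (ha : ∀ n, 0 ≤ a n)
    (haB : ∀ n : ℕ, ∑ k ∈ Finset.Icc 1 n, a k ≤ B * n) (v : ℝ) :
    ∑ k ∈ Finset.Icc 1 ⌊Real.exp v⌋₊, a k ≤ B * Real.exp v := by
  have hB : 0 ≤ B := by simpa using (ha 1).trans (by simpa using haB 1)
  calc _ ≤ B * ⌊Real.exp v⌋₊ := haB _
    _ ≤ B * Real.exp v := by gcongr; exact Nat.floor_le (Real.exp_nonneg v)

lemma one_add_ne_zero_of_re_nonneg {z : ℂ} (hz : 0 ≤ z.re) : 1 + z ≠ 0 := fun h => by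
  have := congrArg Complex.re h
  simp only [Complex.add_re, Complex.one_re, Complex.zero_re] at this
  linarith

lemma laplaceTransform_sum_Icc_floor_exp (ha : ∀ n, 0 ≤ a n)
    (haB : ∀ n : ℕ, ∑ k ∈ Finset.Icc 1 n, a k ≤ B * n) {z : ℂ} (hz : 0 < z.re) :
    laplaceTransform
        (fun v => ((∑ k ∈ Finset.Icc 1 ⌊Real.exp v⌋₊, a k) * Real.exp (-v) : ℝ)) z =
      LSeries (fun n => (a n : ℂ)) (1 + z) / (1 + z) := by
  have hO : (fun n : ℕ => ∑ k ∈ Finset.Icc 1 n, a k) =O[atTop] fun n : ℕ => (n : ℝ) ^ (1 : ℝ) := by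
    refine .of_bound B (.of_forall fun n => ?_)
    rw [Real.norm_of_nonneg (Finset.sum_nonneg fun k _ => ha k), Real.rpow_one, Real.norm_natCast]
    exact haB n
  rw [LSeries_eq_mul_integral_of_nonneg a zero_le_one (by simpa using hz) hO ha,
    mul_div_cancel_left₀ _ (one_add_ne_zero_of_re_nonneg hz.le), ← Real.exp_zero,
    ← integral_comp_exp_Ioi, laplaceTransform]
  refine setIntegral_congr_fun measurableSet_Ioi fun v _ => ?_
  have hcpow : ((Real.exp v : ℝ) : ℂ) ^ (-(1 + z + 1)) =
      Complex.exp (-z * v) * Complex.exp (-v) * Complex.exp (-v) := by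
    rw [Complex.ofReal_exp, Complex.cpow_def_of_ne_zero (Complex.exp_ne_zero _),
      ← Complex.ofReal_exp, ← Complex.ofReal_log (Real.exp_pos v).le, Real.log_exp,
      ← Complex.exp_add, ← Complex.exp_add]
    ring_nf
  have hexp : Complex.exp v * Complex.exp (-v) = 1 := by rw [← Complex.exp_add]; simp
  simp only [hcpow, Complex.real_smul]
  push_cast
  linear_combination (-(∑ k ∈ Finset.Icc 1 ⌊Real.exp v⌋₊, (a k : ℂ)) * Complex.exp (-z * v) *
    Complex.exp (-v)) * hexp

theorem wiener_ikehara_upper (ha : ∀ n, 0 ≤ a n)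
    (haB : ∀ n : ℕ, ∑ k ∈ Finset.Icc 1 n, a k ≤ B * n) {c : ℝ} (hc : 0 ≤ c) {F : ℂ → ℂ}
    (hF : ContinuousOn F {s | 1 ≤ s.re})
    (hFa : EqOn F (fun s => LSeries (fun n => (a n : ℂ)) s - c / (s - 1)) {s | 1 < s.re})
    {ε : ℝ} (hε : 0 < ε) :
    ∀ᶠ x : ℝ in atTop, ∑ k ∈ Finset.Icc 1 ⌊x⌋₊, a k ≤ (c + ε) * x := by
  have hS0 (v : ℝ) : 0 ≤ ∑ k ∈ Finset.Icc 1 ⌊Real.exp v⌋₊, a k :=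
    Finset.sum_nonneg fun k _ => ha k
  have hSB := sum_Icc_floor_exp_le ha haB
  have hSmeas := (monotone_sum_Icc_floor_exp ha).measurable
  have hG : ContinuousOn (fun z => (F (1 + z) - c) / (1 + z)) {z | 0 ≤ z.re} :=
    ((hF.comp (by fun_prop) fun z hz => by simpa using hz).sub continuousOn_const).div
      (by fun_prop) fun z hz => one_add_ne_zero_of_re_nonneg hz
  have hev := eventually_mul_exp_neg_le (monotone_sum_Icc_floor_exp ha) hS0 hSB hc hG
    (fun z (hz : 0 < z.re) => ?_) hε
  · filter_upwards [Real.tendsto_log_atTop.eventually hev, eventually_gt_atTop 0] with x hx hx0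
    rwa [Real.exp_neg, Real.exp_log hx0, ← div_eq_mul_inv, div_le_iff₀ hx0] at hx
  · have hz0 : z ≠ 0 := by rintro rfl; simp at hz
    have hz1 := one_add_ne_zero_of_re_nonneg hz.le
    have hbound (v : ℝ) :
        ‖(((∑ k ∈ Finset.Icc 1 ⌊Real.exp v⌋₊, a k) * Real.exp (-v) : ℝ) : ℂ)‖ ≤ B := by
      rw [Complex.norm_real]
      exact abs_mul_exp_neg_le hS0 hSB v
    simp only [Complex.ofReal_sub _ c]
    rw [laplaceTransform_sub_const (by fun_prop) hbound c hz, hFa (by simpa using hz),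
      laplaceTransform_sum_Icc_floor_exp ha haB hz]
    simp only [add_sub_cancel_left]
    field_simp
    ring

end WienerIkehara

theorem eventually_psi_le {ε : ℝ} (hε : 0 < ε) :
    ∀ᶠ x in atTop, Chebyshev.psi x ≤ (1 + ε) * x := by
  have hpsi (x : ℝ) : Chebyshev.psi x = ∑ n ∈ Finset.Icc 1 ⌊x⌋₊, Λ n := rfl
  have hres : ArithmeticFunction.vonMangoldt.residueClass (1 : ZMod 1) = Λ := by
    ext n
    simp [ArithmeticFunction.vonMangoldt.residueClass, Subsingleton.elim (n : ZMod 1) 1]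
  have hF := ArithmeticFunction.vonMangoldt.eqOn_LFunctionResidueClassAux (q := 1) (a := 1)
    isUnit_one
  simp only [hres, Nat.totient_one, Nat.cast_one, inv_one] at hF
  refine wiener_ikehara_upper (B := Real.log 4 + 4)
    (fun n => ArithmeticFunction.vonMangoldt_nonneg) (fun n => ?_) zero_le_one
    (ArithmeticFunction.vonMangoldt.continuousOn_LFunctionResidueClassAux _) (by simpa using hF) hε
  simpa [hpsi] using Chebyshev.psi_le_const_mul_self n.cast_nonneg

section Landau

lemma dvd_lcm_iff_of_isPrimePow {d a b : ℕ} (hd : IsPrimePow d) :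
    d ∣ a.lcm b ↔ d ∣ a ∨ d ∣ b := by
  refine ⟨fun h => ?_, fun h => h.elim (·.trans (a.dvd_lcm_left b)) (·.trans (a.dvd_lcm_right b))⟩
  rcases eq_or_ne a 0 with rfl | ha
  · exact .inl (dvd_zero d)
  rcases eq_or_ne b 0 with rfl | hb
  · exact .inr (dvd_zero d)
  obtain ⟨p, k, hp, -, rfl⟩ := (isPrimePow_nat_iff d).1 hd
  rwa [hp.pow_dvd_iff_le_factorization (Nat.lcm_ne_zero ha hb), Nat.factorization_lcm ha hb,
    Finsupp.sup_apply, le_sup_iff, ← hp.pow_dvd_iff_le_factorization ha,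
    ← hp.pow_dvd_iff_le_factorization hb] at h

lemma exists_dvd_of_isPrimePow_of_dvd_finset_lcm {ι : Type*} {s : Finset ι} {f : ι → ℕ} {d : ℕ}
    (hd : IsPrimePow d) (h : d ∣ s.lcm f) : ∃ i ∈ s, d ∣ f i := by
  classical
  induction s using Finset.induction_on with
  | empty => exact absurd (Nat.dvd_one.1 h) hd.ne_one
  | insert a s _ ih =>
    rw [Finset.lcm_insert] at h
    rcases (dvd_lcm_iff_of_isPrimePow hd).1 h with ha | hs
    · exact ⟨a, s.mem_insert_self a, ha⟩
    · obtain ⟨i, hi, hdi⟩ := ih hs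
      exact ⟨i, Finset.mem_insert_of_mem hi, hdi⟩

lemma sum_vonMangoldt_mul_divisors_finset_lcm_le {ι : Type*} (s : Finset ι) (f : ι → ℕ)
    {w : ℕ → ℝ} (hw : ∀ d, 0 ≤ w d) :
    ∑ d ∈ (s.lcm f).divisors, Λ d * w d ≤ ∑ i ∈ s, ∑ d ∈ (f i).divisors, Λ d * w d := by
  have hnonneg (d : ℕ) : 0 ≤ Λ d * w d := mul_nonneg ArithmeticFunction.vonMangoldt_nonneg (hw d)
  by_cases hs : s.lcm f = 0
  · rw [hs, Nat.divisors_zero, Finset.sum_empty]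
    exact Finset.sum_nonneg fun i _ => Finset.sum_nonneg fun d _ => hnonneg d
  calc ∑ d ∈ (s.lcm f).divisors, Λ d * w d
      ≤ ∑ d ∈ (s.lcm f).divisors, ∑ i ∈ s with d ∣ f i, Λ d * w d := by
        refine Finset.sum_le_sum fun d hd => ?_
        by_cases hΛ : Λ d = 0
        · simp [hΛ]
        · obtain ⟨i, hi, hdi⟩ := exists_dvd_of_isPrimePow_of_dvd_finset_lcm
            (ArithmeticFunction.vonMangoldt_ne_zero_iff.1 hΛ) (Nat.dvd_of_mem_divisors hd)
          exact Finset.single_le_sum (f := fun _ => Λ d * w d) (fun _ _ => hnonneg d)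
            (Finset.mem_filter.2 ⟨hi, hdi⟩)
    _ = ∑ i ∈ s, ∑ d ∈ (f i).divisors, Λ d * w d := by
        refine Finset.sum_comm' fun d i => ?_
        have hdvd (hi : i ∈ s) : f i ∣ s.lcm f := Finset.dvd_lcm hi
        have hf (hi : i ∈ s) : f i ≠ 0 := ne_zero_of_dvd_ne_zero hs (hdvd hi)
        simp only [Nat.mem_divisors, Finset.mem_filter]
        exact ⟨fun ⟨_, hi, hd⟩ => ⟨⟨hd, hf hi⟩, hi⟩,
          fun ⟨⟨hd, _⟩, hi⟩ => ⟨⟨hd.trans (hdvd hi), hs⟩, hi, hd⟩⟩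

lemma log_mul_min_one_div_le {x : ℝ} (hx : Real.exp 1 ≤ x) (m : ℕ) :
    Real.log m * min 1 (m / x) ≤ Real.log x / x * m := by
  have hx0 : 0 < x := (Real.exp_pos 1).trans_le hx
  rcases le_total x m with h | h
  · have hm0 : (0 : ℝ) < m := hx0.trans_le h
    calc Real.log m * min 1 (m / x) ≤ Real.log m * 1 := by
          gcongr
          exact min_le_left _ _
      _ = Real.log m / m * m := by field_simp
      _ ≤ Real.log x / x * m := by
          gcongr ?_ * m
          exact Real.log_div_self_antitoneOn hx (hx.trans h) h
  · calc Real.log m * min 1 (m / x) ≤ Real.log m * (m / x) := by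
          gcongr
          exact min_le_right _ _
      _ ≤ Real.log x * (m / x) := by
          rcases m.eq_zero_or_pos with rfl | hm
          · simp
          · gcongr
      _ = Real.log x / x * m := by ring

lemma sum_vonMangoldt_mul_min_divisors_le {x : ℝ} (hx : Real.exp 1 ≤ x) (m : ℕ) :
    ∑ d ∈ m.divisors, Λ d * min 1 (d / x) ≤ Real.log x / x * m := by
  have hx0 : 0 < x := (Real.exp_pos 1).trans_le hx
  calc ∑ d ∈ m.divisors, Λ d * min 1 (d / x) ≤ ∑ d ∈ m.divisors, Λ d * min 1 (m / x) := by
        gcongr with d hd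
        exact Nat.divisor_le hd
    _ = Real.log m * min 1 (m / x) := by rw [← Finset.sum_mul, ArithmeticFunction.vonMangoldt_sum]
    _ ≤ Real.log x / x * m := log_mul_min_one_div_le hx m

lemma sum_vonMangoldt_mul_one_sub_min_divisors_le {x : ℝ} (hx : 0 < x) (m : ℕ) :
    ∑ d ∈ m.divisors, Λ d * (1 - min 1 (d / x)) ≤ ∑ d ∈ Finset.Icc 0 ⌊x⌋₊, Λ d * (1 - d / x) := by
  have hnonneg (d : ℕ) : 0 ≤ Λ d * (1 - min 1 (d / x)) :=
    mul_nonneg ArithmeticFunction.vonMangoldt_nonneg (sub_nonneg.2 (min_le_left _ _))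
  calc ∑ d ∈ m.divisors, Λ d * (1 - min 1 (d / x))
      ≤ ∑ d ∈ m.divisors ∪ Finset.Icc 0 ⌊x⌋₊, Λ d * (1 - min 1 (d / x)) :=
        Finset.sum_le_sum_of_subset_of_nonneg Finset.subset_union_left fun d _ _ => hnonneg d
    _ = ∑ d ∈ Finset.Icc 0 ⌊x⌋₊, Λ d * (1 - min 1 (d / x)) := by
        refine (Finset.sum_subset Finset.subset_union_right fun d _ hd => ?_).symm
        have hxd : x < d := (Nat.floor_lt hx.le).1 (by simpa using hd)
        rw [min_eq_left ((one_le_div hx).2 hxd.le), sub_self, mul_zero]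
    _ = ∑ d ∈ Finset.Icc 0 ⌊x⌋₊, Λ d * (1 - d / x) := by
        refine Finset.sum_congr rfl fun d hd => ?_
        have hdx : (d : ℝ) ≤ x := (Nat.le_floor_iff hx.le).1 (Finset.mem_Icc.1 hd).2
        rw [min_eq_right ((div_le_one hx).2 hdx)]

lemma log_finset_lcm_le {ι : Type*} (s : Finset ι) (f : ι → ℕ) {x : ℝ} (hx : Real.exp 1 ≤ x) :
    Real.log ((s.lcm f : ℕ) : ℝ) ≤ Real.log x / x * ∑ i ∈ s, (f i : ℝ) +
      ∑ d ∈ Finset.Icc 0 ⌊x⌋₊, Λ d * (1 - d / x) := by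
  have hx0 : 0 < x := (Real.exp_pos 1).trans_le hx
  calc Real.log ((s.lcm f : ℕ) : ℝ)
      = ∑ d ∈ (s.lcm f).divisors, Λ d * min 1 (d / x) +
          ∑ d ∈ (s.lcm f).divisors, Λ d * (1 - min 1 (d / x)) := by
        rw [← Finset.sum_add_distrib, ← ArithmeticFunction.vonMangoldt_sum]
        simp only [← mul_add, add_sub_cancel, mul_one]
    _ ≤ ∑ i ∈ s, ∑ d ∈ (f i).divisors, Λ d * min 1 (d / x) +
          ∑ d ∈ Finset.Icc 0 ⌊x⌋₊, Λ d * (1 - d / x) :=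
        add_le_add (sum_vonMangoldt_mul_divisors_finset_lcm_le s f fun d => by positivity)
          (sum_vonMangoldt_mul_one_sub_min_divisors_le hx0 _)
    _ ≤ Real.log x / x * ∑ i ∈ s, (f i : ℝ) + ∑ d ∈ Finset.Icc 0 ⌊x⌋₊, Λ d * (1 - d / x) := by
        rw [Finset.mul_sum]
        gcongr with i
        exact sum_vonMangoldt_mul_min_divisors_le hx (f i)

lemma sum_vonMangoldt_mul_sub_eq_integral_psi {x : ℝ} (hx : 0 ≤ x) :
    ∑ d ∈ Finset.Icc 0 ⌊x⌋₊, (x - d) * Λ d = ∫ t in Ioc 0 x, Chebyshev.psi t := by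
  have hderiv : deriv (fun t : ℝ => x - t) = fun _ => -1 := by ext; simp
  rw [sum_mul_eq_sub_integral_mul (fun n => Λ n) hx (f := fun t => x - t)
    (by fun_prop) (by simp [hderiv])]
  simp [hderiv, ← Chebyshev.psi_eq_sum_Icc, integral_neg]

lemma exists_psi_le_add {ε : ℝ} (hε : 0 < ε) :
    ∃ C, ∀ t, 0 ≤ t → Chebyshev.psi t ≤ (1 + ε) * t + C := by
  obtain ⟨T, hT⟩ := eventually_atTop.1 (eventually_psi_le hε)
  refine ⟨Chebyshev.psi T, fun t ht => ?_⟩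
  rcases le_total T t with h | h
  · linarith [hT t h, Chebyshev.psi_nonneg T]
  · have : 0 ≤ (1 + ε) * t := by positivity
    linarith [Chebyshev.psi_mono h]

lemma sum_vonMangoldt_mul_one_sub_div_le {a C : ℝ}
    (hψ : ∀ t, 0 ≤ t → Chebyshev.psi t ≤ a * t + C) {x : ℝ} (hx : 0 < x) :
    ∑ d ∈ Finset.Icc 0 ⌊x⌋₊, Λ d * (1 - d / x) ≤ a * x / 2 + C := by
  have hint : ∫ t in (0 : ℝ)..x, (a * t + C) = x * (a * x / 2 + C) := by
    rw [intervalIntegral.integral_add (Continuous.intervalIntegrable (by fun_prop) _ _)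
      (by simp), intervalIntegral.integral_const_mul]
    simp only [integral_id, intervalIntegral.integral_const, smul_eq_mul, sub_zero]
    ring
  calc ∑ d ∈ Finset.Icc 0 ⌊x⌋₊, Λ d * (1 - d / x)
      = (∑ d ∈ Finset.Icc 0 ⌊x⌋₊, (x - d) * Λ d) / x := by
        rw [Finset.sum_div]
        refine Finset.sum_congr rfl fun d _ => ?_
        field_simp
    _ = (∫ t in (0 : ℝ)..x, Chebyshev.psi t) / x := by
        rw [sum_vonMangoldt_mul_sub_eq_integral_psi hx.le, intervalIntegral.integral_of_le hx.le]
    _ ≤ (∫ t in (0 : ℝ)..x, (a * t + C)) / x := by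
        gcongr
        exact intervalIntegral.integral_mono_on hx.le Chebyshev.psi_mono.intervalIntegrable
          (Continuous.intervalIntegrable (by fun_prop) _ _) fun t ht => hψ t ht.1
    _ = a * x / 2 + C := by rw [hint, mul_div_cancel_left₀ _ hx.ne']

lemma tendsto_sqrt_mul_log_atTop : Tendsto (fun y : ℝ => √(y * Real.log y)) atTop atTop :=
  Real.tendsto_sqrt_atTop.comp (tendsto_id.atTop_mul_atTop₀ Real.tendsto_log_atTop)

lemma eventually_log_le_mul {ε : ℝ} (hε : 0 < ε) : ∀ᶠ y : ℝ in atTop, Real.log y ≤ ε * y := by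
  filter_upwards [Real.isLittleO_log_id_atTop.def hε, eventually_ge_atTop 0] with y hy hy0
  exact (le_abs_self _).trans (by simpa [abs_of_nonneg hy0] using hy)

lemma eventually_log_sqrt_mul_log_le {ε : ℝ} (hε : 0 < ε) :
    ∀ᶠ y : ℝ in atTop, Real.log √(y * Real.log y) ≤ (1 / 2 + ε) * Real.log y := by
  filter_upwards [Real.tendsto_log_atTop.eventually
      (eventually_log_le_mul (ε := 2 * ε) (by positivity)),
    Real.tendsto_log_atTop.eventually_gt_atTop 0, eventually_gt_atTop 0] with y hloglog hlog hy
  rw [Real.log_sqrt (by positivity), Real.log_mul hy.ne' hlog.ne']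
  linarith

lemma eventually_log_add_one_le_mul_sqrt {ε : ℝ} (hε : 0 < ε) :
    ∀ᶠ y : ℝ in atTop, Real.log (y + 1) ≤ ε * √(y * Real.log y) := by
  filter_upwards [tendsto_sqrt_mul_log_atTop.eventually
      (eventually_log_le_mul (ε := ε / 2) (by positivity)),
    Real.tendsto_log_atTop.eventually_ge_atTop 2, eventually_ge_atTop 1] with y hX hlog hy
  have hle : y + 1 ≤ y * Real.log y := by nlinarith
  have hpos : 0 < y + 1 := by linarith
  rw [Real.log_sqrt (hpos.le.trans hle)] at hX
  linarith [Real.log_le_log hpos hle]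

theorem eventually_log_finset_lcm_le {ε : ℝ} (hε : 0 < ε) :
    ∀ᶠ y : ℝ in atTop, ∀ {ι : Type*} (s : Finset ι) (f : ι → ℕ), ∑ i ∈ s, (f i : ℝ) ≤ y →
      Real.log ((s.lcm f : ℕ) : ℝ) ≤ (1 + ε) * √(y * Real.log y) := by
  obtain ⟨C, hψ⟩ := exists_psi_le_add (half_pos hε)
  filter_upwards [eventually_log_sqrt_mul_log_le (ε := ε / 4) (by positivity),
    tendsto_sqrt_mul_log_atTop.eventually_ge_atTop (Real.exp 1),
    tendsto_sqrt_mul_log_atTop.eventually_ge_atTop (C / (ε / 2)), eventually_ge_atTop 1]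
    with y hlogx hx hC hy ι s f hf
  have hsq : √(y * Real.log y) ^ 2 = y * Real.log y :=
    Real.sq_sqrt (mul_nonneg (by positivity) (Real.log_nonneg hy))
  set x := √(y * Real.log y)
  have hx0 : 0 < x := (Real.exp_pos 1).trans_le hx
  have hlogx0 : 0 ≤ Real.log x := Real.log_nonneg (Real.one_le_exp zero_le_one |>.trans hx)
  rw [div_le_iff₀' (by positivity)] at hC
  have hmain : Real.log x / x * ∑ i ∈ s, (f i : ℝ) ≤ (1 / 2 + ε / 4) * x :=
    calc Real.log x / x * ∑ i ∈ s, (f i : ℝ)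
        ≤ (1 / 2 + ε / 4) * Real.log y / x * y := by
          gcongr
          exact div_nonneg (hlogx0.trans hlogx) hx0.le
      _ = (1 / 2 + ε / 4) * x ^ 2 / x := by rw [hsq]; ring
      _ = (1 / 2 + ε / 4) * x := by field_simp
  linarith [log_finset_lcm_le s f hx, sum_vonMangoldt_mul_one_sub_div_le hψ hx0]

end Landau

section DFA

lemma exists_lt_eq_injOn_Iio {β : Type*} [Fintype β] (w : ℕ → β) :
    ∃ i j, i < j ∧ j ≤ Fintype.card β ∧ w i = w j ∧ InjOn w (Iio j) := by
  classical
  have hex : ∃ j, ∃ i < j, w i = w j := by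
    obtain ⟨a, b, hab, h⟩ := Finite.exists_ne_map_eq_of_infinite w
    rcases hab.lt_or_gt with hlt | hlt
    exacts [⟨b, a, hlt, h⟩, ⟨a, b, hlt, h.symm⟩]
  obtain ⟨i, hi, hij⟩ := Nat.find_spec hex
  have hmin {a b : ℕ} (hb : b < Nat.find hex) (hab : a < b) : w a ≠ w b :=
    fun h => Nat.find_min hex hb ⟨a, hab, h⟩
  have hinj : InjOn w (Iio (Nat.find hex)) := by
    intro a ha b hb h
    by_contra hne
    rcases Ne.lt_or_gt hne with hlt | hlt
    exacts [hmin hb hlt h, hmin ha hlt h.symm]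
  refine ⟨i, Nat.find hex, hi, ?_, hij, hinj⟩
  calc Nat.find hex = (Finset.range (Nat.find hex)).card := (Finset.card_range _).symm
    _ ≤ Fintype.card β :=
      Finset.card_le_card_of_injOn w (fun _ _ => Finset.mem_univ _) (by simpa using hinj)

lemma exists_pairwiseDisjoint_forall_not_disjoint {β : Type*} [Finite β] (p : Finset β → Prop)
    (hp : ∀ C, p C → C.Nonempty) :
    ∃ s : Finset (Finset β), (∀ C ∈ s, p C) ∧ (s : Set (Finset β)).PairwiseDisjoint id ∧
      ∀ C, p C → ∃ D ∈ s, ¬Disjoint C D := by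
  classical
  let F : Set (Finset (Finset β)) :=
    {s | (∀ C ∈ s, p C) ∧ (s : Set (Finset β)).PairwiseDisjoint id}
  obtain ⟨s, ⟨hs, hdisj⟩, hmax⟩ := F.toFinite.exists_maximal ⟨∅, by simp [F]⟩
  refine ⟨s, hs, hdisj, fun C hC => ?_⟩
  by_contra! hno
  have hmem : insert C s ∈ F :=
    ⟨fun D hD => (Finset.mem_insert.1 hD).elim (· ▸ hC) (hs D), by
      rw [Finset.coe_insert]
      exact hdisj.insert fun D hD _ => hno D hD⟩
  have hCs : C ∈ s := hmax hmem (Finset.subset_insert C s) (Finset.mem_insert_self C s)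
  exact (hp C hC).ne_empty (disjoint_self.1 (hno C hCs))

lemma sum_card_le_card_of_pairwiseDisjoint {β : Type*} [Fintype β] {s : Finset (Finset β)}
    (hs : (s : Set (Finset β)).PairwiseDisjoint id) :
    ∑ C ∈ s, C.card ≤ Fintype.card β := by
  classical
  exact (Finset.card_biUnion hs).symm.trans_le (Finset.card_le_univ _)

variable {α σ : Type*} {M : DFA α σ}

/-- Some word of length `k` takes the state `p` of `M` to the state `q`. -/
def ReachesIn (M : DFA α σ) (k : ℕ) (p q : σ) : Prop :=
  ∃ w : List α, w.length = k ∧ M.evalFrom p w = q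

lemma ReachesIn.trans {a b : ℕ} {p q r : σ} (hpq : ReachesIn M a p q) (hqr : ReachesIn M b q r) :
    ReachesIn M (a + b) p r := by
  obtain ⟨u, rfl, rfl⟩ := hpq
  obtain ⟨v, rfl, rfl⟩ := hqr
  exact ⟨u ++ v, List.length_append, M.evalFrom_of_append p u v⟩

lemma ReachesIn.of_dvd {k m : ℕ} {p : σ} (h : ReachesIn M k p p) (hkm : k ∣ m) :
    ReachesIn M m p p := by
  obtain ⟨c, rfl⟩ := hkm
  induction c with
  | zero => exact ⟨[], rfl, rfl⟩
  | succ c ih => exact ih.trans h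

lemma reachesIn_take_take (p : σ) (w : List α) {i j : ℕ} (hij : i ≤ j) (hj : j ≤ w.length) :
    ReachesIn M (j - i) (M.evalFrom p (w.take i)) (M.evalFrom p (w.take j)) := by
  refine ⟨(w.drop i).take (j - i), by rw [List.length_take, List.length_drop]; omega, ?_⟩
  rw [← DFA.evalFrom_of_append, ← List.take_add, Nat.add_sub_cancel' hij]

/-- `C` behaves like the vertex set of a simple cycle in the transition graph of `M`: each of its
states lies on a closed walk of length `C.card`. That the walk stays in `C` plays no role in the
pumping argument and is not required. -/
def IsCycleSet (M : DFA α σ) (C : Finset σ) : Prop :=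
  C.Nonempty ∧ ∀ v ∈ C, ReachesIn M C.card v v

lemma exists_isCycleSet_of_card_le_length [Fintype σ] (M : DFA α σ) (p : σ) {w : List α}
    (hw : Fintype.card σ ≤ w.length) :
    ∃ C, IsCycleSet M C ∧ ∀ v ∈ C, ∃ k ≤ w.length, M.evalFrom p (w.take k) = v := by
  classical
  let visit (k : ℕ) : σ := M.evalFrom p (w.take k)
  obtain ⟨i, j, hij, hj, heq, hinj⟩ := exists_lt_eq_injOn_Iio visit
  have hcard : ((Finset.Ico i j).image visit).card = j - i := by
    rw [Finset.card_image_of_injOn (hinj.mono (by simp [Finset.coe_Ico, Ico_subset_Iio_self])),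
      Nat.card_Ico]
  refine ⟨(Finset.Ico i j).image visit, ⟨(Finset.nonempty_Ico.2 hij).image visit,
    Finset.forall_mem_image.2 fun k hk => ?_⟩, Finset.forall_mem_image.2 fun k hk => ?_⟩ <;>
    rw [Finset.mem_Ico] at hk
  · have hkj : ReachesIn M (j - k) (visit k) (visit i) :=
      heq ▸ reachesIn_take_take p w hk.2.le (hj.trans hw)
    have hik : ReachesIn M (k - i) (visit i) (visit k) :=
      reachesIn_take_take p w hk.1 (by omega)
    rw [hcard, ← Nat.sub_add_sub_cancel hk.2.le hk.1]
    exact hkj.trans hik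
  · exact ⟨k, by omega, rfl⟩

lemma IsUnivLength.of_add [Fintype σ] {P ℓ : ℕ}
    (hP : ∀ C, IsCycleSet M C → ∃ v ∈ C, ReachesIn M P v v) (hℓ : Fintype.card σ ≤ ℓ)
    (h : IsUnivLength M.accepts (ℓ + P)) : IsUnivLength M.accepts ℓ := by
  rintro w rfl
  obtain ⟨C, hC, hvisit⟩ := exists_isCycleSet_of_card_le_length M M.start hℓ
  obtain ⟨v, hvC, hv⟩ := hP C hC
  obtain ⟨k, hk, rfl⟩ := hvisit v hvC
  have hstart : ReachesIn M k M.start (M.evalFrom M.start (w.take k)) :=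
    ⟨w.take k, List.length_take_of_le hk, rfl⟩
  have hend : ReachesIn M (w.length - k) (M.evalFrom M.start (w.take k)) (M.eval w) := by
    simpa [DFA.eval] using reachesIn_take_take M.start w hk le_rfl
  obtain ⟨u, hu, heval⟩ := (hstart.trans hv).trans hend
  have hmem : u ∈ M.accepts := h u (by omega)
  rw [DFA.mem_accepts] at hmem ⊢
  exact heval ▸ hmem

lemma sInf_isUnivLength_le [Fintype σ] {P : ℕ} (hP0 : 0 < P)
    (hP : ∀ C, IsCycleSet M C → ∃ v ∈ C, ReachesIn M P v v)
    (h : ∃ ℓ, IsUnivLength M.accepts ℓ) :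
    sInf {ℓ | IsUnivLength M.accepts ℓ} ≤ Fintype.card σ + P := by
  by_contra! hlt
  have hmem : IsUnivLength M.accepts (sInf {ℓ | IsUnivLength M.accepts ℓ}) := Nat.sInf_mem h
  obtain ⟨ℓ, hℓ⟩ := Nat.exists_eq_add_of_le' (le_of_add_le_right hlt.le)
  rw [hℓ] at hmem
  have hle : sInf {ℓ | IsUnivLength M.accepts ℓ} ≤ ℓ :=
    Nat.sInf_le (hmem.of_add hP (by omega))
  omega

lemma exists_sInf_isUnivLength_le_card_add_lcm [Fintype σ] (h : ∃ ℓ, IsUnivLength M.accepts ℓ) :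
    ∃ s : Finset (Finset σ), ∑ C ∈ s, C.card ≤ Fintype.card σ ∧ 0 < s.lcm Finset.card ∧
      sInf {ℓ | IsUnivLength M.accepts ℓ} ≤ Fintype.card σ + s.lcm Finset.card := by
  obtain ⟨s, hs, hdisj, hmeet⟩ :=
    exists_pairwiseDisjoint_forall_not_disjoint (IsCycleSet M) fun _ hC => hC.1
  have hpos : 0 < s.lcm Finset.card := by
    rw [Nat.pos_iff_ne_zero, Ne, Finset.lcm_eq_zero_iff]
    rintro ⟨C, hC, h0⟩
    exact (hs C hC).1.card_ne_zero h0
  refine ⟨s, sum_card_le_card_of_pairwiseDisjoint hdisj, hpos,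
    sInf_isUnivLength_le hpos (fun C hC => ?_) h⟩
  obtain ⟨D, hD, hCD⟩ := hmeet C hC
  obtain ⟨v, hvC, hvD⟩ := Finset.not_disjoint_iff.1 hCD
  exact ⟨v, hvC, ((hs D hD).2 v hvD).of_dvd (Finset.dvd_lcm hD)⟩

end DFA

lemma add_le_exp_of_log_le {x p a b : ℝ} (hx : 0 ≤ x) (hp : 1 ≤ p) (ha : Real.log (x + 1) ≤ a)
    (hb : Real.log p ≤ b) : x + p ≤ Real.exp (a + b) :=
  calc x + p ≤ (x + 1) * p := by nlinarith
    _ = Real.exp (Real.log (x + 1) + Real.log p) := by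
      rw [Real.exp_add, Real.exp_log (by positivity), Real.exp_log (by positivity)]
    _ ≤ Real.exp (a + b) := by gcongr

theorem dfa_min_univ_length_upper_bound_general.{u, v} {ε : ℝ} (hε : 0 < ε) :
    ∃ N : ℕ, ∀ n : ℕ, N ≤ n → ∀ (α : Type u) (σ : Type v) [Fintype σ], Fintype.card σ = n →
      ∀ M : DFA α σ, (∃ ℓ : ℕ, IsUnivLength M.accepts ℓ) →
        ((sInf {ℓ : ℕ | IsUnivLength M.accepts ℓ} : ℕ) : ℝ) ≤
          Real.exp ((1 + ε) * √(n * Real.log n)) := by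
  obtain ⟨N, hN⟩ := eventually_atTop.1 <| tendsto_natCast_atTop_atTop.eventually <|
    (eventually_log_finset_lcm_le.{v} (half_pos hε)).and
      (eventually_log_add_one_le_mul_sqrt (half_pos hε))
  refine ⟨N, fun n hn α σ _ hcard M hM => ?_⟩
  obtain ⟨hlcm, hlog⟩ := hN n hn
  obtain ⟨s, hsum, hpos, hle⟩ := exists_sInf_isUnivLength_le_card_add_lcm hM
  rw [hcard] at hsum hle
  calc ((sInf {ℓ : ℕ | IsUnivLength M.accepts ℓ} : ℕ) : ℝ)
      ≤ n + (s.lcm Finset.card : ℕ) := by exact_mod_cast hle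
    _ ≤ Real.exp (ε / 2 * √(n * Real.log n) + (1 + ε / 2) * √(n * Real.log n)) :=
      add_le_exp_of_log_le n.cast_nonneg (by exact_mod_cast hpos) hlog
        (hlcm s Finset.card (by exact_mod_cast hsum))
    _ = Real.exp ((1 + ε) * √(n * Real.log n)) := by ring_nf

/-- Asymptotic upper bound on the minimal universality length of an `n`-state DFA:
for every `ε > 0`, for all sufficiently large `n`, every `n`-state DFA with a universal
length has minimal universality length at most `exp ((1 + ε) * √(n * log n))`. -/
theorem dfa_min_univ_length_upper_bound :
    ∀ ε : ℝ, 0 < ε → ∃ N : ℕ, ∀ n : ℕ, N ≤ n →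
      ∀ (σ Q : Type) [Fintype σ] [Nonempty σ] [Fintype Q],
        Fintype.card Q = n →
        ∀ M : DFA σ Q, (∃ ℓ : ℕ, IsUnivLength M.accepts ℓ) →
          ((sInf {ℓ : ℕ | IsUnivLength M.accepts ℓ} : ℕ) : ℝ) ≤
            Real.exp ((1 + ε) * Real.sqrt ((n : ℝ) * Real.log (n : ℝ))) := by
  intro ε hε
  obtain ⟨N, hN⟩ := dfa_min_univ_length_upper_bound_general hε
  exact ⟨N, fun n hn σ Q _ _ _ => hN n hn σ Q⟩
end

section
/- Let t ≥ 1, let Σ be an alphabet with exactly t letters a₁, …, a_t, and let p(1) < p(2) < … < p(t) be the first t prime numbers (p(1) = 2). Let L be the language of all nonempty words w over Σ such that if the first letter of w is a_i, then p(i) divides the length of w (equivalently, L = ⋃_{1 ≤ i ≤ t} a_i (Σ^{p(i)})^* Σ^{p(i)−1}). Then the least ℓ ≥ 0 such that every word of length ℓ over Σ belongs to L is ℓ = p(1)·p(2)···p(t). -/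
/-!
A word of positive length `ℓ` may begin with any letter `a`, so `ℓ` is universal exactly when it
is a positive common multiple of all the periods `n a`. Hence the minimal universality length is
their least common multiple, which for distinct primes is their product.
-/

/-- The length `ℓ` is universal for the language `L` when every word of length `ℓ` is in `L`. -/
def IsUniversalLength {α : Type*} (L : Language α) (ℓ : ℕ) : Prop :=
  ∀ w : List α, w.length = ℓ → w ∈ L

/-- The language `⋃ a, a (Σ ^ n a)^* Σ ^ (n a - 1)` of a family of periods `n`, encoded as the
nonempty words whose length is a multiple of the period of their first letter; a period `n a = 0`
admits no word beginning with `a`. -/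
def cycleLanguage {α : Type*} (n : α → ℕ) : Language α :=
  {w | ∃ a, w.head? = some a ∧ n a ∣ w.length}

section CycleLanguage

variable {α : Type*} (n : α → ℕ)

theorem nil_notMem_cycleLanguage : [] ∉ cycleLanguage n := by
  rintro ⟨a, ha, -⟩
  cases ha

theorem cons_mem_cycleLanguage_iff (a : α) (w : List α) :
    a :: w ∈ cycleLanguage n ↔ n a ∣ (a :: w).length := by
  constructor
  · rintro ⟨b, hb, hdvd⟩
    obtain rfl : a = b := Option.some.inj hb
    exact hdvd
  · exact fun hdvd ↦ ⟨a, rfl, hdvd⟩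

theorem isUniversalLength_cycleLanguage_iff (ℓ : ℕ) :
    IsUniversalLength (cycleLanguage n) ℓ ↔ ℓ ≠ 0 ∧ ∀ a, n a ∣ ℓ := by
  constructor
  · intro h
    cases ℓ with
    | zero => exact absurd (h [] rfl) (nil_notMem_cycleLanguage n)
    | succ k =>
      refine ⟨k.succ_ne_zero, fun a ↦ ?_⟩
      have hlen : (a :: List.replicate k a).length = k + 1 := by simp
      exact hlen ▸ (cons_mem_cycleLanguage_iff n a _).mp (h _ hlen)
  · rintro ⟨hℓ, hdvd⟩ w rfl
    cases w with
    | nil => exact absurd rfl hℓ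
    | cons a w => exact (cons_mem_cycleLanguage_iff n a w).mpr (hdvd a)

end CycleLanguage

theorem isLeast_finset_lcm {ι : Type*} (s : Finset ι) (f : ι → ℕ) (hf : ∀ i ∈ s, f i ≠ 0) :
    IsLeast {m : ℕ | m ≠ 0 ∧ ∀ i ∈ s, f i ∣ m} (s.lcm f) := by
  constructor
  · exact ⟨Finset.lcm_ne_zero_iff.mpr hf, fun _ ↦ Finset.dvd_lcm⟩
  · rintro m ⟨hm, hdvd⟩
    exact Nat.le_of_dvd (Nat.pos_of_ne_zero hm) (Finset.lcm_dvd hdvd)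

theorem min_univ_length_prime_cycles_general {α : Type*} [Fintype α] (n : α → ℕ)
    (hn : ∀ a, n a ≠ 0) :
    IsLeast {ℓ : ℕ | IsUniversalLength (cycleLanguage n) ℓ} (Finset.univ.lcm n) := by
  simpa [isUniversalLength_cycleLanguage_iff] using
    isLeast_finset_lcm Finset.univ n fun a _ ↦ hn a

theorem lcm_eq_prod_of_prime_of_injOn {ι : Type*} {s : Finset ι} {f : ι → ℕ}
    (hf : ∀ i ∈ s, (f i).Prime) (hinj : Set.InjOn f s) : s.lcm f = ∏ i ∈ s, f i :=
  Finset.lcm_eq_prod fun i hi j hj hij ↦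
    (Nat.coprime_primes (hf i hi) (hf j hj)).mpr (hinj.ne hi hj hij)

theorem lcm_nth_prime_eq_prod (t : ℕ) :
    Finset.univ.lcm (fun i : Fin t ↦ Nat.nth Nat.Prime i) = ∏ i : Fin t, Nat.nth Nat.Prime i :=
  lcm_eq_prod_of_prime_of_injOn (fun i _ ↦ Nat.prime_nth_prime i)
    ((Nat.nth_injective Nat.infinite_setOfPred_prime).comp Fin.val_injective).injOn

/-- For the alphabet `Fin t` (`t ≥ 1` letters) and the language of nonempty words `w` such that
the `i`-th prime divides `|w|` whenever the first letter of `w` is the `i`-th letter,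
the least universal length is the product of the first `t` primes.
Here `Nat.nth Nat.Prime i` is the `(i+1)`-st prime, so `Nat.nth Nat.Prime 0 = 2`. -/
theorem min_univ_length_prime_cycles (t : ℕ) (ht : 1 ≤ t) :
    IsLeast
      {ℓ : ℕ | ∀ w : List (Fin t), w.length = ℓ →
        ∃ i : Fin t, w.head? = some i ∧ Nat.nth Nat.Prime (i : ℕ) ∣ w.length}
      (∏ i : Fin t, Nat.nth Nat.Prime (i : ℕ)) := by
  rw [← lcm_nth_prime_eq_prod]
  exact min_univ_length_prime_cycles_general _ fun i ↦ (Nat.prime_nth_prime i).ne_zero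
end
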